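/- arXiv:1608.07141 — 9 statements merged into one kernel-verified Lean document; each statement's English description precedes it below -/
import Mathlib

section
/- Let q ≥ 1 and δ = q² + q + 1. For 1 ≤ i ≤ q let P_i ∈ GL_{q+1}(ℤ/δℤ) be the permutation matrix interchanging coordinates i and i+1, and for 1 ≤ i ≤ q+1 let M_i ∈ GL_{q+1}(ℤ/δℤ) be the matrix obtained from the identity matrix by replacing its i-th row with the row all of whose entries are −1. Then the subgroup of GL_{q+1}(ℤ/δℤ) generated by P_1, …, P_q and M_1, …, M_{q+1} is isomorphic to the symmetric group S_{q+2} on q+2 letters. -/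
/-- The permutation matrix `P_i` interchanging coordinates `i` and `i+1`. -/
def swapMatrix (q δ : ℕ) (i : Fin q) : Matrix (Fin (q + 1)) (Fin (q + 1)) (ZMod δ) :=
  (Equiv.swap i.castSucc i.succ).permMatrix (ZMod δ)

/-- The matrix `M_i` obtained from the identity matrix by replacing its `i`-th row with the
row all of whose entries are `−1`. -/
def negRowMatrix (q δ : ℕ) (i : Fin (q + 1)) : Matrix (Fin (q + 1)) (Fin (q + 1)) (ZMod δ) :=
  Matrix.of fun a b => if a = i then -1 else if a = b then 1 else 0

/-!
In `Rᵐ` take the basis vectors `e_a` together with `-∑ e_a`. These `m + 1` vectors sum to zero, so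
every permutation of them extends to a linear automorphism, which gives a representation of the
symmetric group on `m + 1` letters. A permutation fixing the extra vector acts by its permutation
matrix, and the transposition of `e_i` with the extra vector acts by the identity matrix with
`i`-th row `-1`. These last transpositions already generate the symmetric group, and the
representation is faithful as soon as the `m + 1` vectors are distinct.
-/

open Equiv Equiv.Perm

theorem closure_range_swap_none_some {n : Type*} [DecidableEq n] [Finite n] :
    Subgroup.closure (Set.range fun i : n => swap none (some i)) = ⊤ := by
  set S := Set.range fun i : n => swap none (some i)
  have isSwap_of_mem : ∀ σ ∈ S, σ.IsSwap := by
    rintro _ ⟨i, rfl⟩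
    exact ⟨none, some i, (Option.some_ne_none i).symm, rfl⟩
  have : MulAction.IsPretransitive (Subgroup.closure S) (Option n) := by
    refine (MulAction.isPretransitive_iff_base none).mpr fun k => ?_
    cases k with
    | none => exact ⟨1, one_smul _ _⟩
    | some i => exact ⟨⟨swap none (some i), Subgroup.subset_closure ⟨i, rfl⟩⟩, swap_apply_left _ _⟩
  exact closure_of_isSwap_of_isPretransitive isSwap_of_mem

section SimplexVertices

variable (n R : Type*) [DecidableEq n] [Ring R]

/-- The matrix whose rows are the vertices of a simplex in `Rⁿ` with vertex sum `0`: the standard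
basis vectors, at the indices `some a`, and the vector with all entries `-1`, at the index
`none`. -/
def simplexVertices : Matrix (Option n) n R :=
  Matrix.of fun k => k.elim (-1) fun a => Pi.single a 1

@[simp]
theorem simplexVertices_none : simplexVertices n R none = -1 := rfl

variable {n} in
@[simp]
theorem simplexVertices_some (a : n) : simplexVertices n R (some a) = Pi.single a 1 := rfl

theorem simplexVertices_submatrix_some : (simplexVertices n R).submatrix some id = 1 := by
  ext a b
  simp [Matrix.one_eq_pi_single]

theorem simplexVertices_injective [Nontrivial n] [Nontrivial R] :
    Function.Injective (simplexVertices n R) := by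
  have none_ne_some (a : n) : simplexVertices n R none ≠ simplexVertices n R (some a) := by
    obtain ⟨b, hb⟩ := exists_ne a
    exact fun h => by simpa [hb] using congrFun h b
  rintro (_ | a) (_ | b) h
  · rfl
  · exact absurd h (none_ne_some b)
  · exact absurd h.symm (none_ne_some a)
  · by_contra hab
    have hne : a ≠ b := fun hab' => hab (congrArg some hab')
    simpa [hne] using congrFun h a

variable [Fintype n]

theorem sum_simplexVertices (b : n) : ∑ k, simplexVertices n R k b = 0 := by
  simp [Fintype.sum_option, Pi.single_apply]

variable {n R}

theorem simplexVertices_mul_submatrix_some {m : Type*} {A : Matrix (Option n) m R}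
    (hA : ∀ b, ∑ k, A k b = 0) : simplexVertices n R * A.submatrix some id = A := by
  ext k b
  cases k with
  | none =>
    have hcol : A none b + ∑ a, A (some a) b = 0 := by
      simpa [Fintype.sum_option] using hA b
    simpa [Matrix.mul_apply] using (eq_neg_of_add_eq_zero_left hcol).symm
  | some a => simp [Matrix.mul_apply, Pi.single_apply]

end SimplexVertices

section SimplexRep

variable {n : Type*} [DecidableEq n] (R : Type*) [Ring R]

/-- The matrix of the linear map that sends the `k`-th simplex vertex, as a row vector, to the
`σ k`-th one. Matrices act on row vectors from the right, so `σ ↦ simplexMatrix R σ` reverses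
products. -/
def simplexMatrix (σ : Perm (Option n)) : Matrix n n R :=
  (simplexVertices n R).submatrix (σ ∘ some) id

theorem simplexMatrix_one : simplexMatrix R (1 : Perm (Option n)) = 1 :=
  simplexVertices_submatrix_some n R

theorem simplexMatrix_optionCongr (σ : Perm n) :
    simplexMatrix R (optionCongr σ) = σ.permMatrix R := by
  ext a b
  simp [simplexMatrix, PEquiv.toMatrix_apply, Pi.single_apply, eq_comm]

theorem simplexMatrix_swap_none_some (i : n) :
    simplexMatrix R (swap none (some i)) = (1 : Matrix n n R).updateRow i (-1) := by
  ext a b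
  by_cases hai : a = i
  · simp [simplexMatrix, hai]
  · simp [simplexMatrix, hai, swap_apply_of_ne_of_ne, Matrix.one_eq_pi_single]

variable [Fintype n]

theorem simplexVertices_mul_simplexMatrix (σ : Perm (Option n)) :
    simplexVertices n R * simplexMatrix R σ = (simplexVertices n R).submatrix σ id :=
  simplexVertices_mul_submatrix_some fun b =>
    (Equiv.sum_comp σ (simplexVertices n R · b)).trans (sum_simplexVertices n R b)

theorem simplexMatrix_mul_simplexMatrix (σ τ : Perm (Option n)) :
    simplexMatrix R σ * simplexMatrix R τ = simplexMatrix R (τ * σ) :=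
  calc simplexMatrix R σ * simplexMatrix R τ
      = (simplexVertices n R * simplexMatrix R τ).submatrix (σ ∘ some) id := rfl
    _ = simplexMatrix R (τ * σ) := by rw [simplexVertices_mul_simplexMatrix]; rfl

variable (n)

/-- The representation of `Perm (Option n)` on row vectors in `Rⁿ` that permutes the simplex
vertices. The inverse turns the order-reversing `simplexMatrix` into a homomorphism. -/
def simplexRep : Perm (Option n) →* GL n R :=
  MonoidHom.toHomUnits
    { toFun σ := simplexMatrix R σ⁻¹
      map_one' := by rw [inv_one, simplexMatrix_one]
      map_mul' σ τ := by rw [simplexMatrix_mul_simplexMatrix, mul_inv_rev] }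

variable {n}

theorem coe_simplexRep (σ : Perm (Option n)) :
    (simplexRep n R σ : Matrix n n R) = simplexMatrix R σ⁻¹ := rfl

theorem simplexRep_injective [Nontrivial n] [Nontrivial R] :
    Function.Injective (simplexRep n R) := by
  intro σ τ h
  have hmatrix : simplexMatrix R σ⁻¹ = simplexMatrix R τ⁻¹ := congrArg Units.val h
  have hvertices : (simplexVertices n R).submatrix ⇑σ⁻¹ id =
      (simplexVertices n R).submatrix ⇑τ⁻¹ id := by
    rw [← simplexVertices_mul_simplexMatrix, hmatrix, simplexVertices_mul_simplexMatrix]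
  exact inv_injective <| Equiv.ext fun k => simplexVertices_injective n R (congrFun hvertices k)

theorem coe_simplexRep_swap_none_some (i : n) :
    (simplexRep n R (swap none (some i)) : Matrix n n R) =
      (1 : Matrix n n R).updateRow i (-1) := by
  rw [coe_simplexRep, swap_inv, simplexMatrix_swap_none_some]

theorem coe_simplexRep_optionCongr_inv (σ : Perm n) :
    (simplexRep n R (optionCongr σ)⁻¹ : Matrix n n R) = σ.permMatrix R := by
  rw [coe_simplexRep, inv_inv, simplexMatrix_optionCongr]

theorem range_simplexRep_eq_closure :
    (simplexRep n R).range =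
      Subgroup.closure (Set.range fun i => simplexRep n R (swap none (some i))) := by
  rw [MonoidHom.range_eq_map, ← closure_range_swap_none_some, MonoidHom.map_closure,
    ← Set.range_comp]
  rfl

theorem closure_permMatrix_or_updateRow_eq_range {ι : Type*} (σ : ι → Perm n) :
    Subgroup.closure {u : GL n R | (∃ j, (u : Matrix n n R) = (σ j).permMatrix R) ∨
      ∃ i, (u : Matrix n n R) = (1 : Matrix n n R).updateRow i (-1)} =
      (simplexRep n R).range := by
  apply le_antisymm
  · rw [Subgroup.closure_le]
    rintro u (⟨j, hu⟩ | ⟨i, hu⟩)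
    · exact ⟨_, Units.ext ((coe_simplexRep_optionCongr_inv R (σ j)).trans hu.symm)⟩
    · exact ⟨_, Units.ext ((coe_simplexRep_swap_none_some R i).trans hu.symm)⟩
  · rw [range_simplexRep_eq_closure]
    apply Subgroup.closure_mono
    rintro _ ⟨i, rfl⟩
    exact Or.inr ⟨i, coe_simplexRep_swap_none_some R i⟩

end SimplexRep

theorem negRowMatrix_eq_updateRow (q δ : ℕ) :
    negRowMatrix q δ = fun i => (1 : Matrix _ _ (ZMod δ)).updateRow i (-1) := by
  ext i a b
  simp [negRowMatrix, Matrix.updateRow_apply, Matrix.one_apply]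

theorem subgroup_gen_by_swaps_negrows_iso_symm_general {n ι : Type*} [Fintype n] [DecidableEq n]
    [Nontrivial n] (R : Type*) [Ring R] [Nontrivial R] (σ : ι → Perm n) :
    Nonempty
      (Subgroup.closure {u : GL n R | (∃ j, (u : Matrix n n R) = (σ j).permMatrix R) ∨
        ∃ i, (u : Matrix n n R) = (1 : Matrix n n R).updateRow i (-1)} ≃* Perm (Option n)) :=
  ⟨(MulEquiv.subgroupCongr (closure_permMatrix_or_updateRow_eq_range R σ)).trans
    (MonoidHom.ofInjective (simplexRep_injective R)).symm⟩

/-- For `δ = q² + q + 1`, the subgroup of `GL_{q+1}(ℤ/δℤ)` generated by the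
matrices `P_1, …, P_q` and `M_1, …, M_{q+1}` is isomorphic to the symmetric group
`S_{q+2}`. -/
theorem subgroup_gen_by_swaps_negrows_iso_symm (q : ℕ) (hq : 1 ≤ q) :
    Nonempty
      ((Subgroup.closure
          {u : GL (Fin (q + 1)) (ZMod (q ^ 2 + q + 1)) |
            (∃ i : Fin q, (u : Matrix (Fin (q + 1)) (Fin (q + 1)) (ZMod (q ^ 2 + q + 1))) =
                swapMatrix q (q ^ 2 + q + 1) i) ∨
            ∃ i : Fin (q + 1),
              (u : Matrix (Fin (q + 1)) (Fin (q + 1)) (ZMod (q ^ 2 + q + 1))) =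
                negRowMatrix q (q ^ 2 + q + 1) i}) ≃*
        Equiv.Perm (Fin (q + 2))) := by
  have : Nontrivial (Fin (q + 1)) := Fin.nontrivial_iff_two_le.mpr (by lia)
  have : Fact (1 < q ^ 2 + q + 1) := ⟨by lia⟩
  rw [negRowMatrix_eq_updateRow]
  exact (subgroup_gen_by_swaps_negrows_iso_symm_general (ZMod (q ^ 2 + q + 1))
    fun i : Fin q => swap i.castSucc i.succ).map (·.trans finSuccEquivLast.symm.permCongrHom)
end

section
/- Let D be a finite set with |D| = k ≥ 1. Let 𝒞 be the set of k×3 matrices with entries in D such that each of the three columns has pairwise distinct entries whose set equals D (equivalently, each column is a bijection from the k row indices to D). Let the symmetric group S_k act on 𝒞 by permuting rows and S₃ act by permuting columns. Then the number of orbits of the action of S_k × S₃ on 𝒞 equals (1/6)·((k!)² + 3·k! + 2·(τ_k + 1)), where τ_k denotes the number of elements of order exactly 3 in S_k. -/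
/-- The set `𝒞` of `k × 3` matrices with entries in `D` each of whose columns is a bijection
from the row indices to `D`. -/
def ColumnBijMatrices (D : Type*) (k : ℕ) : Type _ :=
  {M : Fin k → Fin 3 → D // ∀ j : Fin 3, Function.Bijective fun i => M i j}

/-- Two matrices in `𝒞` are related iff one is obtained from the other by permuting rows
(by some `σ ∈ S_k`) and columns (by some `τ ∈ S₃`); the equivalence classes of this relation
are exactly the orbits of the action of `S_k × S₃` on `𝒞`. -/
def matrixOrbitRel (D : Type*) (k : ℕ) (M N : ColumnBijMatrices D k) : Prop :=
  ∃ (σ : Equiv.Perm (Fin k)) (τ : Equiv.Perm (Fin 3)),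
    ∀ i j, N.1 i j = M.1 (σ i) (τ j)

/-!
Once `D` is labelled by the row indices, a matrix in `𝒞` is a triple `c` of elements of `G = S_k`,
on which row permutations act by right translation and column permutations by permuting the
entries. We count orbits of `G × Sym ι` on `ι → G`, for every finite group `G`, by Burnside's lemma.
A tuple is fixed by `(g, t)` when `c (t j) * g = c j`, so going once around the cycle of `j` under
`t` forces `g ^ n = 1`, where `n` is the length of that cycle; conversely, if this holds for all
cycles, then `c` can be prescribed freely at one point of each. Hence `t` contributes
`#{g | g ^ n = 1 for every cycle length n} * |G| ^ #cycles`. For three columns this is `|G| ^ 3` for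
the identity, `|G| ^ 2` for each of the three transpositions, and `#{g | g ^ 3 = 1} * |G|` for each
of the two 3-cycles.
-/

open Equiv (Perm)
open MulAction
open scoped DomMulAct Nat

section Period

variable {M α G : Type*}

theorem period_eq_prime [Monoid M] [MulAction M α] {m : M} {p : ℕ} (hp : p.Prime) (hm : m ^ p = 1)
    {a : α} (ha : m • a ≠ a) : period m a = p :=
  (hp.eq_one_or_self_of_dvd _ <|
    (period_dvd_orderOf m a).trans (orderOf_dvd_of_pow_eq_one hm)).resolve_left
      (mt period_eq_one_iff.1 ha)

theorem zpow_eq_zpow_of_pow_period_eq_one [Group M] [MulAction M α] [Group G] {t : M} {a : α}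
    {g : G} (hg : g ^ period t a = 1) {m n : ℤ} (h : t ^ m • a = t ^ n • a) : g ^ m = g ^ n := by
  have hdvd : (period t a : ℤ) ∣ -n + m := by
    rw [← zpow_smul_eq_iff_period_dvd, zpow_add, mul_smul, h, zpow_neg, inv_smul_smul]
  have hpow : g ^ (-n + m) = 1 :=
    orderOf_dvd_iff_zpow_eq_one.1 <|
      (Int.natCast_dvd_natCast.2 (orderOf_dvd_of_pow_eq_one hg)).trans hdvd
  rwa [zpow_add, zpow_neg, inv_mul_eq_one, eq_comm] at hpow

theorem card_forall_pow_period_eq_one_of_fixed [Monoid M] [MulAction M α] [Monoid G] {m : M} {a : α}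
    (ha : m • a = a) : Nat.card {g : G // ∀ b : α, g ^ period m b = 1} = 1 := by
  have h (g : G) : (∀ b : α, g ^ period m b = 1) ↔ g = 1 :=
    ⟨fun hg ↦ by simpa [period_eq_one_iff.2 ha] using hg a, fun hg ↦ by simp [hg]⟩
  simp only [h, Nat.card_unique]

theorem card_pow_prime_eq_one [Monoid G] [Finite G] {p : ℕ} (hp : p.Prime) :
    Nat.card {g : G // g ^ p = 1} = Nat.card {g : G // orderOf g = p} + 1 := by
  have := Fact.mk hp
  have h : {g : G | g ^ p = 1} = insert 1 {g : G | orderOf g = p} := by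
    ext g
    by_cases hg : g = 1 <;> simp [orderOf_eq_prime_iff, hg]
  rw [← Set.coe_ofPred, ← Set.coe_ofPred, Nat.card_coe_set_eq, Nat.card_coe_set_eq, h,
    Set.ncard_insert_of_notMem (by simp [hp.ne_one.symm])]

end Period

/-- The number of cycles of `t`, fixed points included (`0` if there are infinitely many). -/
noncomputable def numCycles {ι : Type*} (t : Perm ι) : ℕ :=
  Nat.card (Quotient (Perm.SameCycle.setoid t))

/-- The group of symmetries of `ι`-tuples in `G`: right translation of all entries by a common
element of `G`, and permutation of the positions. Both factors are opposite groups because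
`c ↦ c * g` and `c ↦ c ∘ t` are right actions. -/
abbrev TupleSymm (ι G : Type*) := Gᵐᵒᵖ × (Perm ι)ᵈᵐᵃ

namespace TupleSymm

section FixedTuples

variable {ι G : Type*} [Group G]

instance : MulAction (TupleSymm ι G) (ι → G) :=
  MulAction.prodOfSMulCommClass Gᵐᵒᵖ (Perm ι)ᵈᵐᵃ (ι → G)

/-- Right translation by `g` together with precomposition with `t`. -/
def of (g : G) (t : Perm ι) : TupleSymm ι G := (.op g, .mk t)

theorem of_smul_apply (g : G) (t : Perm ι) (c : ι → G) (j : ι) :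
    (of g t • c) j = c (t j) * g := rfl

theorem of_zpow (g : G) (t : Perm ι) (n : ℤ) : of g t ^ n = of (g ^ n) (t ^ n) := rfl

theorem mem_fixedBy_of {g : G} {t : Perm ι} {c : ι → G} :
    c ∈ fixedBy (ι → G) (of g t) ↔ ∀ j, c (t j) * g = c j := funext_iff

theorem zpow_apply_mul_zpow_of_mem_fixedBy {g : G} {t : Perm ι} {c : ι → G}
    (hc : c ∈ fixedBy (ι → G) (of g t)) (n : ℤ) (j : ι) :
    c ((t ^ n) j) * g ^ n = c j :=
  mem_fixedBy_of.1 (of_zpow g t n ▸ fixedBy_subset_fixedBy_zpow (ι → G) (of g t) n hc) j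

theorem pow_period_eq_one_of_mem_fixedBy {g : G} {t : Perm ι} {c : ι → G}
    (hc : c ∈ fixedBy (ι → G) (of g t)) (j : ι) : g ^ period t j = 1 := by
  have hj : (t ^ period t j) j = j := pow_period_smul t j
  simpa [hj] using zpow_apply_mul_zpow_of_mem_fixedBy hc (period t j) j

/-- On the cycle of a base point `r`, a fixed tuple is given by `(t ^ n) r ↦ g ^ (-n)`. -/
theorem nonempty_fixedBy_iff {g : G} {t : Perm ι} :
    (fixedBy (ι → G) (of g t)).Nonempty ↔ ∀ j : ι, g ^ period t j = 1 := by
  refine ⟨fun ⟨_, hc⟩ ↦ pow_period_eq_one_of_mem_fixedBy hc, fun hg ↦ ?_⟩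
  let base (j : ι) : ι := (Quotient.mk (Perm.SameCycle.setoid t) j).out
  have base_apply (j : ι) : base (t j) = base j :=
    congrArg Quotient.out <| Quotient.sound (Perm.sameCycle_apply_left.2 (.refl t j))
  have sameCycle_base (j : ι) : t.SameCycle (base j) j :=
    Quotient.mk_out (s := Perm.SameCycle.setoid t) j
  choose n hn using sameCycle_base
  refine ⟨fun j ↦ g ^ (-n j), mem_fixedBy_of.2 fun j ↦ ?_⟩
  have hpow : g ^ n (t j) = g ^ (1 + n j) := by
    apply zpow_eq_zpow_of_pow_period_eq_one (hg (base j))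
    rw [Perm.smul_def, Perm.smul_def, zpow_add, zpow_one, Perm.mul_apply, hn, ← base_apply, hn]
  simp [hpow, zpow_add]

theorem mem_fixedBy_one_iff_sameCycle_le_ker {t : Perm ι} {c : ι → G} :
    c ∈ fixedBy (ι → G) (of (1 : G) t) ↔ Perm.SameCycle.setoid t ≤ Setoid.ker c := by
  constructor
  · rintro hc i _ ⟨n, rfl⟩
    simpa [eq_comm, Setoid.ker_def] using zpow_apply_mul_zpow_of_mem_fixedBy hc n i
  · intro h
    refine mem_fixedBy_of.2 fun j ↦ ?_
    rw [mul_one]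
    exact h (Perm.sameCycle_apply_left.2 (.refl t j))

theorem mem_fixedBy_iff_mul_inv_mem {g : G} {t : Perm ι} {c₀ c : ι → G}
    (hc₀ : c₀ ∈ fixedBy (ι → G) (of g t)) :
    c ∈ fixedBy (ι → G) (of g t) ↔ c * c₀⁻¹ ∈ fixedBy (ι → G) (of (1 : G) t) := by
  simp only [mem_fixedBy_of] at hc₀ ⊢
  refine forall_congr' fun j ↦ ?_
  rw [Pi.mul_apply, Pi.mul_apply, Pi.inv_apply, Pi.inv_apply, mul_one, ← hc₀ j, mul_inv_rev,
    ← mul_assoc, mul_left_inj, eq_mul_inv_iff_mul_eq]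

/-- A fixed tuple `c₀` serves as origin: `c` is fixed exactly when `c * c₀⁻¹` is constant on the
cycles of `t`. -/
def fixedByEquiv {g : G} {t : Perm ι} {c₀ : ι → G} (hc₀ : c₀ ∈ fixedBy (ι → G) (of g t)) :
    fixedBy (ι → G) (of g t) ≃ (Quotient (Perm.SameCycle.setoid t) → G) :=
  ((Equiv.mulRight c₀⁻¹).subtypeEquiv fun _ ↦
    (mem_fixedBy_iff_mul_inv_mem hc₀).trans mem_fixedBy_one_iff_sameCycle_le_ker).trans
    (Setoid.liftEquiv _)

end FixedTuples

section Counting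

variable {ι G : Type*} [Group G]

theorem card_fixedBy [Finite ι] (g : G) (t : Perm ι) [Decidable (∀ j : ι, g ^ period t j = 1)] :
    Nat.card (fixedBy (ι → G) (of g t)) =
      if ∀ j : ι, g ^ period t j = 1 then Nat.card G ^ numCycles t else 0 := by
  split_ifs with h
  · obtain ⟨c₀, hc₀⟩ := nonempty_fixedBy_iff.2 h
    rw [Nat.card_congr (fixedByEquiv hc₀), Nat.card_fun, numCycles]
  · rw [← nonempty_fixedBy_iff, Set.not_nonempty_iff_eq_empty] at h
    rw [h, Nat.card_coe_set_eq, Set.ncard_empty]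

theorem sum_card_fixedBy [Finite ι] [Fintype G] (t : Perm ι) :
    ∑ g : G, Nat.card (fixedBy (ι → G) (of g t)) =
      Nat.card {g : G // ∀ j : ι, g ^ period t j = 1} * Nat.card G ^ numCycles t := by
  classical
  simp only [card_fixedBy, ← Finset.sum_filter, Finset.sum_const, smul_eq_mul]
  rw [Nat.card_eq_fintype_card (α := {_g : G // _}), Fintype.card_subtype]

theorem card_orbits_mul_card_mul_factorial [Fintype ι] [DecidableEq ι] [Finite G] :
    Nat.card (orbitRel.Quotient (TupleSymm ι G) (ι → G)) * (Nat.card G * (Fintype.card ι)!) =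
      ∑ t : Perm ι,
        Nat.card {g : G // ∀ j : ι, g ^ period t j = 1} * Nat.card G ^ numCycles t := by
  have := Fintype.ofFinite G
  let e : G × Perm ι ≃ TupleSymm ι G := MulOpposite.opEquiv.prodCongr DomMulAct.mk
  calc
    _ = Nat.card (orbitRel.Quotient (TupleSymm ι G) (ι → G)) * Nat.card (TupleSymm ι G) := by
      rw [← Nat.card_congr e, Nat.card_prod, Nat.card_perm, Nat.card_eq_fintype_card (α := ι)]
    _ = Nat.card (Σ x : TupleSymm ι G, fixedBy (ι → G) x) := by
      rw [Nat.card_congr (sigmaFixedByEquivOrbitsProdGroup _ _),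
        Nat.card_prod (orbitRel.Quotient _ _)]
    _ = Nat.card (Σ p : G × Perm ι, fixedBy (ι → G) (of p.1 p.2)) :=
      (Nat.card_congr (e.sigmaCongrLeft (β := fun x ↦ fixedBy (ι → G) x))).symm
    _ = ∑ t : Perm ι, ∑ g : G, Nat.card (fixedBy (ι → G) (of g t)) := by
      rw [Nat.card_sigma, Fintype.sum_prod_type_right]
    _ = _ := Fintype.sum_congr _ _ sum_card_fixedBy

end Counting

end TupleSymm

section FinThree

instance {ι : Type*} [Fintype ι] [DecidableEq ι] (t : Perm ι) :
    Fintype (Quotient (Perm.SameCycle.setoid t)) :=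
  @Quotient.fintype ι _ _ (Perm.instDecidableRelSameCycle t)

theorem numCycles_eq_card {ι : Type*} [Fintype ι] [DecidableEq ι] (t : Perm ι) :
    numCycles t = Fintype.card (Quotient (Perm.SameCycle.setoid t)) :=
  Nat.card_eq_fintype_card

theorem sum_numCycles_fin_three {M : Type*} [AddCommMonoid M] (f : ℕ → M) :
    ∑ t : Perm (Fin 3), f (numCycles t) = f 3 + 3 • f 2 + 2 • f 1 := by
  have h : Finset.univ.val.map (numCycles (ι := Fin 3)) = {3, 2, 2, 2, 1, 1} := by
    rw [funext numCycles_eq_card]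
    decide
  calc ∑ t : Perm (Fin 3), f (numCycles t)
    _ = ((Finset.univ.val.map numCycles).map f).sum := by rw [Multiset.map_map]; rfl
    _ = f 3 + 3 • f 2 + 2 • f 1 := by
      rw [h]
      simp [succ_nsmul, add_assoc]

theorem exists_fixed_or_numCycles_eq_one (t : Perm (Fin 3)) :
    numCycles t ≠ 1 ∧ (∃ i, t i = i) ∨ numCycles t = 1 ∧ t ^ 3 = 1 ∧ ∀ i, t i ≠ i := by
  rw [numCycles_eq_card]
  revert t
  decide

theorem card_forall_pow_period_eq_one_fin_three {G : Type*} [Monoid G] (t : Perm (Fin 3)) :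
    Nat.card {g : G // ∀ j : Fin 3, g ^ period t j = 1} =
      if numCycles t = 1 then Nat.card {g : G // g ^ 3 = 1} else 1 := by
  obtain ⟨hn, i, hi⟩ | ⟨hn, ht, hmove⟩ := exists_fixed_or_numCycles_eq_one t
  · rw [if_neg hn, card_forall_pow_period_eq_one_of_fixed (m := t) hi]
  · have hperiod (j : Fin 3) : period t j = 3 := period_eq_prime Nat.prime_three ht (hmove j)
    simp only [if_pos hn, hperiod, forall_const]

theorem six_mul_card_orbits_fin_three (G : Type*) [Group G] [Finite G] :
    6 * Nat.card (orbitRel.Quotient (TupleSymm (Fin 3) G) (Fin 3 → G)) =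
      Nat.card G ^ 2 + 3 * Nat.card G + 2 * (Nat.card {g : G // orderOf g = 3} + 1) := by
  have hsum := TupleSymm.card_orbits_mul_card_mul_factorial (ι := Fin 3) (G := G)
  simp only [card_forall_pow_period_eq_one_fin_three] at hsum
  rw [sum_numCycles_fin_three fun n ↦
      (if n = 1 then Nat.card {g : G // g ^ 3 = 1} else 1) * Nat.card G ^ n,
    if_neg (by decide), if_neg (by decide), if_pos rfl, card_pow_prime_eq_one Nat.prime_three,
    Fintype.card_fin, show 3 ! = 6 from rfl, smul_eq_mul, smul_eq_mul] at hsum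
  apply Nat.eq_of_mul_eq_mul_left (Nat.card_pos (α := G))
  linarith

end FinThree

namespace ColumnBijMatrices

variable {D : Type*} {k : ℕ}

/-- A matrix is the tuple of its columns, each a permutation once `D` is labelled by `e`. -/
noncomputable def equivColumns (e : D ≃ Fin k) :
    ColumnBijMatrices D k ≃ (Fin 3 → Perm (Fin k)) where
  toFun M j := (Equiv.ofBijective _ (M.2 j)).trans e
  invFun c := ⟨fun i j ↦ e.symm (c j i), fun j ↦ ((c j).trans e.symm).bijective⟩
  left_inv M := by
    apply Subtype.ext
    funext i j
    simp
  right_inv c := by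
    ext
    simp

theorem equivColumns_apply (e : D ≃ Fin k) (M : ColumnBijMatrices D k) (j : Fin 3) (i : Fin k) :
    equivColumns e M j i = e (M.1 i j) := rfl

theorem matrixOrbitRel_iff_orbitRel (e : D ≃ Fin k) (M N : ColumnBijMatrices D k) :
    matrixOrbitRel D k M N ↔
      orbitRel (TupleSymm (Fin 3) (Perm (Fin k))) _ (equivColumns e M) (equivColumns e N) := by
  have h (σ : Perm (Fin k)) (t : Perm (Fin 3)) :
      (∀ i j, N.1 i j = M.1 (σ i) (t j)) ↔
        TupleSymm.of σ t • equivColumns e M = equivColumns e N := by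
    simp only [funext_iff, Equiv.ext_iff, TupleSymm.of_smul_apply, Perm.mul_apply,
      equivColumns_apply, e.apply_eq_iff_eq, eq_comm (a := M.1 _ _)]
    exact forall_comm
  simp only [matrixOrbitRel, h]
  rw [Setoid.comm', orbitRel_apply, mem_orbit_iff, Prod.exists,
    MulOpposite.op_surjective.exists]
  simp only [DomMulAct.mk.surjective.exists]
  rfl

/-- The orbits on `𝒞` are the orbits of tuples of columns under `TupleSymm`. -/
noncomputable def orbitsEquiv (e : D ≃ Fin k) : Quot (matrixOrbitRel D k) ≃
    orbitRel.Quotient (TupleSymm (Fin 3) (Perm (Fin k))) (Fin 3 → Perm (Fin k)) :=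
  Quot.congr (equivColumns e) (matrixOrbitRel_iff_orbitRel e)

end ColumnBijMatrices

/-- For a finite set `D` with `|D| = k ≥ 1`, the number of orbits of the
action of `S_k × S₃` on `𝒞` (permuting rows and columns) equals
`(1/6)·((k!)² + 3·k! + 2·(τ_k + 1))`, where `τ_k` is the number of elements of order
exactly `3` in `S_k`. -/
theorem count_column_matrices_orbits (k : ℕ) (hk : 1 ≤ k) (D : Type*) [Fintype D]
    (hD : Fintype.card D = k) :
    6 * Nat.card (Quot (matrixOrbitRel D k)) =
      (Nat.factorial k) ^ 2 + 3 * Nat.factorial k +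
        2 * (Nat.card {σ : Equiv.Perm (Fin k) // orderOf σ = 3} + 1) := by
  rw [Nat.card_congr (ColumnBijMatrices.orbitsEquiv (Fintype.equivFinOfCardEq hD)),
    six_mul_card_orbits_fin_three, Nat.card_perm, Nat.card_fin]
end

section
/- Let q be a prime power, δ = q² + q + 1, E a based difference matrix, and Γ(E) the associated presented group. Let (e₀, e₁, e₂) and (f₀, f₁, f₂) be any two rows of E. Then in Γ(E) the relation (σ₁^{−e₁} σ₀ σ₁^{e₁})^{f₀ − e₀} · σ₁^{f₁ − e₁} · σ₂^{f₂ − e₂} = 1 holds (exponents taken via integer representatives modulo δ). In other words, the triple (σ₁^{−e₁} σ₀ σ₁^{e₁}, σ₁, σ₂) satisfies the product relations of the matrix obtained from E by subtracting the row (e₀, e₁, e₂) from every row. -/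
/-!
Subtracting row `e` from row `f` conjugates the relator: by the relation
`σ₀ ^ e₀ * σ₁ ^ e₁ * σ₂ ^ e₂ = 1`, the word of the subtracted row is the conjugate of
`σ₀ ^ f₀ * σ₁ ^ f₁ * σ₂ ^ f₂` by `σ₂ ^ e₂`, so one is trivial if and only if the other is.
-/

/-- A subset `D` of `ℤ/δℤ` is a difference set if every nonzero element `s` has exactly one
representation `s = d - d'` with `d, d' ∈ D`. -/
def IsDifferenceSet {δ : ℕ} (D : Finset (ZMod δ)) : Prop :=
  ∀ s : ZMod δ, s ≠ 0 → ∃! p : ZMod δ × ZMod δ, p.1 ∈ D ∧ p.2 ∈ D ∧ p.1 - p.2 = s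

/-- A difference matrix is a `(q+1) × 3` matrix over `ℤ/δℤ` each of whose columns has pairwise
distinct entries forming a difference set. -/
def IsDifferenceMatrix (q δ : ℕ) (E : Fin (q + 1) → ZMod 3 → ZMod δ) : Prop :=
  ∀ j : ZMod 3, (Function.Injective fun i => E i j) ∧
    IsDifferenceSet (Finset.image (fun i => E i j) Finset.univ)

/-- A difference matrix is based if some row is `(0,0,0)`. -/
def IsBasedMatrix (q δ : ℕ) (E : Fin (q + 1) → ZMod 3 → ZMod δ) : Prop :=
  ∃ i, ∀ j, E i j = 0

/-- The relators of the Singer cyclic lattice `Γ(E)`. -/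
def singerRels (q δ : ℕ) (E : Fin (q + 1) → ZMod 3 → ZMod δ) : Set (FreeGroup (ZMod 3)) :=
  {r | (∃ j : ZMod 3, r = FreeGroup.of j ^ δ) ∨
    ∃ i : Fin (q + 1), r =
      FreeGroup.of 0 ^ (E i 0).val * FreeGroup.of 1 ^ (E i 1).val *
        FreeGroup.of 2 ^ (E i 2).val}

/-- The Singer cyclic lattice associated to a based difference matrix `E`. -/
def SingerGroup (q δ : ℕ) (E : Fin (q + 1) → ZMod 3 → ZMod δ) : Type :=
  PresentedGroup (singerRels q δ E)

instance (q δ : ℕ) (E : Fin (q + 1) → ZMod 3 → ZMod δ) : Group (SingerGroup q δ E) :=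
  inferInstanceAs (Group (PresentedGroup (singerRels q δ E)))

/-- The generator `σ_i` of `Γ(E)`. -/
def σ (q δ : ℕ) (E : Fin (q + 1) → ZMod 3 → ZMod δ) (i : ZMod 3) : SingerGroup q δ E :=
  PresentedGroup.of i

theorem pow_val_add_of_pow_eq_one {M : Type*} [Monoid M] {n : ℕ} [NeZero n] {a : M}
    (ha : a ^ n = 1) (x y : ZMod n) :
    a ^ (x + y).val = a ^ x.val * a ^ y.val := by
  rw [ZMod.val_add, ← pow_eq_pow_mod _ ha, pow_add]

section Group

variable {G : Type*} [Group G]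

theorem conj_mul_mul_eq_one_iff {a b c : G} (h : a * b * c = 1) (a' b' c' : G) :
    b⁻¹ * a' * b * b' * c' = 1 ↔ a * a' * (b * b') * (c' * c) = 1 := by
  have hc : c = (a * b)⁻¹ := eq_inv_of_mul_eq_one_right h
  have conj : b⁻¹ * a' * b * b' * c' = c * (a * a' * (b * b') * (c' * c)) * c⁻¹ := by
    rw [hc]; group
  rw [conj, conj_eq_one_iff]

theorem conj_pow_val_sub_mul_eq_one_iff {n : ℕ} [NeZero n] {a b c : G}
    (ha : a ^ n = 1) (hb : b ^ n = 1) (hc : c ^ n = 1) {x y z : ZMod n}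
    (h : a ^ x.val * b ^ y.val * c ^ z.val = 1) (x' y' z' : ZMod n) :
    ((b ^ y.val)⁻¹ * a * b ^ y.val) ^ (x' - x).val * b ^ (y' - y).val * c ^ (z' - z).val = 1 ↔
      a ^ x'.val * b ^ y'.val * c ^ z'.val = 1 := by
  have conj_pow_eq : ((b ^ y.val)⁻¹ * a * b ^ y.val) ^ (x' - x).val =
      (b ^ y.val)⁻¹ * a ^ (x' - x).val * b ^ y.val := by
    simpa only [inv_inv] using conj_pow (a := (b ^ y.val)⁻¹) (b := a) (i := (x' - x).val)
  rw [conj_pow_eq, conj_mul_mul_eq_one_iff h, ← pow_val_add_of_pow_eq_one ha,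
    ← pow_val_add_of_pow_eq_one hb, ← pow_val_add_of_pow_eq_one hc, add_sub_cancel,
    add_sub_cancel, sub_add_cancel]

end Group

section SingerGroup

variable (q δ : ℕ) (E : Fin (q + 1) → ZMod 3 → ZMod δ)

theorem σ_pow_eq_one (j : ZMod 3) : σ q δ E j ^ δ = 1 :=
  PresentedGroup.one_of_mem (rels := singerRels q δ E) (.inl ⟨j, rfl⟩)

theorem σ_row_eq_one (i : Fin (q + 1)) :
    σ q δ E 0 ^ (E i 0).val * σ q δ E 1 ^ (E i 1).val * σ q δ E 2 ^ (E i 2).val = 1 :=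
  PresentedGroup.one_of_mem (rels := singerRels q δ E) (.inr ⟨i, rfl⟩)

theorem singer_row_subtraction_general [NeZero δ] (i₁ i₂ : Fin (q + 1)) :
    ((σ q δ E 1 ^ (E i₁ 1).val)⁻¹ * σ q δ E 0 * σ q δ E 1 ^ (E i₁ 1).val) ^
            (E i₂ 0 - E i₁ 0).val *
        σ q δ E 1 ^ (E i₂ 1 - E i₁ 1).val * σ q δ E 2 ^ (E i₂ 2 - E i₁ 2).val = 1 :=
  (conj_pow_val_sub_mul_eq_one_iff (σ_pow_eq_one q δ E 0) (σ_pow_eq_one q δ E 1)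
    (σ_pow_eq_one q δ E 2) (σ_row_eq_one q δ E i₁) _ _ _).2 (σ_row_eq_one q δ E i₂)

end SingerGroup

/-- For any two rows `(e₀,e₁,e₂)` and `(f₀,f₁,f₂)` of a based difference
matrix `E`, the relation
`(σ₁^{−e₁} σ₀ σ₁^{e₁})^{f₀−e₀} · σ₁^{f₁−e₁} · σ₂^{f₂−e₂} = 1` holds in `Γ(E)`,
exponents taken via integer representatives modulo `δ = q² + q + 1`. -/
theorem singer_row_subtraction (q : ℕ) (hq : IsPrimePow q)
    (E : Fin (q + 1) → ZMod 3 → ZMod (q ^ 2 + q + 1))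
    (hE : IsDifferenceMatrix q (q ^ 2 + q + 1) E)
    (hB : IsBasedMatrix q (q ^ 2 + q + 1) E)
    (i₁ i₂ : Fin (q + 1)) :
    ((σ q (q ^ 2 + q + 1) E 1 ^ (E i₁ 1).val)⁻¹ * σ q (q ^ 2 + q + 1) E 0 *
          σ q (q ^ 2 + q + 1) E 1 ^ (E i₁ 1).val) ^ (E i₂ 0 - E i₁ 0).val *
        σ q (q ^ 2 + q + 1) E 1 ^ (E i₂ 1 - E i₁ 1).val *
        σ q (q ^ 2 + q + 1) E 2 ^ (E i₂ 2 - E i₁ 2).val = 1 :=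
  singer_row_subtraction_general q (q ^ 2 + q + 1) E i₁ i₂
end

section
/- Let Γ be the group with presentation ⟨x, y, z ∣ x⁷ = y⁷ = z⁷ = 1, x y z³ = 1, x³ y³ z = 1⟩. Then there exists an automorphism φ of Γ satisfying φ(x) = x², φ(y) = y², φ(z) = y x, and φ has order exactly 3 in the automorphism group of Γ. -/
/-- The relators of the Singer cyclic lattice `Γ_{2,2}`: with generators `x, y, z` (indexed by
`0, 1, 2 : Fin 3`), the relators are `x⁷`, `y⁷`, `z⁷`, `x y z³` and `x³ y³ z`. -/
def gamma22Rels : Set (FreeGroup (Fin 3)) :=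
  {FreeGroup.of 0 ^ 7, FreeGroup.of 1 ^ 7, FreeGroup.of 2 ^ 7,
    FreeGroup.of 0 * FreeGroup.of 1 * FreeGroup.of 2 ^ 3,
    FreeGroup.of 0 ^ 3 * FreeGroup.of 1 ^ 3 * FreeGroup.of 2}

/-- The group `Γ_{2,2} = ⟨x, y, z ∣ x⁷ = y⁷ = z⁷ = 1, x y z³ = 1, x³ y³ z = 1⟩`. -/
def Gamma22 : Type := PresentedGroup gamma22Rels

instance : Group Gamma22 := inferInstanceAs (Group (PresentedGroup gamma22Rels))

/-!
Since `z⁷ = 1`, the relation `x y z³ = 1` says `x y = z⁴`, that is, `z = (x y)²`. Hence `x` and `y`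
generate `Γ`, and the last relation becomes `x³ y³ x y x y = 1`. Its conjugate by `x` is
`x² y² (y x)³ = 1`, the first mixed relation for the triple `(x², y², y x)`; the second one reads
`x⁶ y⁷ x = 1`. So the triple satisfies all the relations and defines an endomorphism. It sends
`x` to `x²` and `y` to `y²`, so its cube sends them to `x⁸ = x` and `y⁸ = y` and is the identity.
It is not itself the identity, because `x ≠ 1` in the quotient `ℤ/7` in which `x ↦ 1`, `y ↦ -1`,
`z ↦ 0`.
-/

lemma end_pow_apply_eq_pow_pow {M : Type*} [Monoid M] {f : Monoid.End M} {a : M} {k : ℕ}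
    (hf : f a = a ^ k) (n : ℕ) : (f ^ n) a = a ^ k ^ n := by
  induction n with
  | zero => simp
  | succ n ih =>
    rw [pow_succ, Monoid.End.coe_mul, Function.comp_apply, hf, map_pow, ih, ← pow_mul, ← pow_succ]

lemma mul_pow_eq_one_comm {M : Type*} [CancelMonoid M] {a b : M} {n : ℕ} :
    (a * b) ^ n = 1 ↔ (b * a) ^ n = 1 := by
  rw [← mul_eq_right (b := a), mul_pow_mul, mul_eq_left]

/-- `IsGamma22Triple a b c` says that `a, b, c` satisfy the defining relations of `Gamma22`, so that
`x ↦ a`, `y ↦ b`, `z ↦ c` extends to a homomorphism; see `Gamma22.lift`. -/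
structure IsGamma22Triple {G : Type*} [Group G] (a b c : G) : Prop where
  fst_pow_seven : a ^ 7 = 1
  snd_pow_seven : b ^ 7 = 1
  thd_pow_seven : c ^ 7 = 1
  mul_mul_cube : a * b * c ^ 3 = 1
  cube_mul_cube_mul : a ^ 3 * b ^ 3 * c = 1

namespace IsGamma22Triple

variable {G : Type*} [Group G] {a b c : G}

lemma iff_lift_eq_one :
    IsGamma22Triple a b c ↔ ∀ r ∈ gamma22Rels, FreeGroup.lift ![a, b, c] r = 1 := by
  simp only [gamma22Rels, Set.forall_mem_insert, Set.mem_singleton_iff, forall_eq, map_mul, map_pow,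
    FreeGroup.lift_apply_of]
  exact ⟨fun ⟨ha, hb, hc, h₁, h₂⟩ => ⟨ha, hb, hc, h₁, h₂⟩,
    fun ⟨ha, hb, hc, h₁, h₂⟩ => ⟨ha, hb, hc, h₁, h₂⟩⟩

lemma self_inv_one (ha : a ^ 7 = 1) : IsGamma22Triple a a⁻¹ 1 where
  fst_pow_seven := ha
  snd_pow_seven := by rw [inv_pow, ha, inv_one]
  thd_pow_seven := one_pow 7
  mul_mul_cube := by simp
  cube_mul_cube_mul := by simp

variable (h : IsGamma22Triple a b c)

include h

lemma mul_eq_thd_pow_four : a * b = c ^ 4 :=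
  calc
    a * b = (c ^ 3)⁻¹ := eq_inv_of_mul_eq_one_left h.mul_mul_cube
    _ = c ^ 4 := inv_eq_of_mul_eq_one_right (by rw [← pow_add, h.thd_pow_seven])

lemma thd_eq_mul_sq : c = (a * b) ^ 2 := by
  rw [h.mul_eq_thd_pow_four, ← pow_mul, pow_succ c 7, h.thd_pow_seven, one_mul]

lemma mul_pow_seven : (a * b) ^ 7 = 1 := by
  rw [h.mul_eq_thd_pow_four, pow_right_comm, h.thd_pow_seven, one_pow]

lemma sq_sq_mul : IsGamma22Triple (a ^ 2) (b ^ 2) (b * a) where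
  fst_pow_seven := by rw [pow_right_comm, h.fst_pow_seven, one_pow]
  snd_pow_seven := by rw [pow_right_comm, h.snd_pow_seven, one_pow]
  thd_pow_seven := mul_pow_eq_one_comm.mp h.mul_pow_seven
  mul_mul_cube :=
    calc
      a ^ 2 * b ^ 2 * (b * a) ^ 3 = a⁻¹ * (a ^ 3 * b ^ 3 * (a * b) ^ 2) * a := by
        simp only [pow_succ, pow_zero, one_mul]; group
      _ = 1 := by rw [← h.thd_eq_mul_sq, h.cube_mul_cube_mul, mul_one, inv_mul_cancel]
  cube_mul_cube_mul :=
    calc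
      (a ^ 2) ^ 3 * (b ^ 2) ^ 3 * (b * a) = a ^ 6 * b ^ 7 * a := by
        simp only [← pow_mul, pow_succ b 6, mul_assoc]
      _ = 1 := by rw [h.snd_pow_seven, mul_one, ← pow_succ, h.fst_pow_seven]

end IsGamma22Triple

namespace Gamma22

/-- The generator `x` of `Γ_{2,2}`. -/
abbrev x : Gamma22 := PresentedGroup.of 0

/-- The generator `y` of `Γ_{2,2}`. -/
abbrev y : Gamma22 := PresentedGroup.of 1

/-- The generator `z` of `Γ_{2,2}`. -/
abbrev z : Gamma22 := PresentedGroup.of 2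

lemma isGamma22Triple : IsGamma22Triple x y z := by
  have lift_eq_mk : FreeGroup.lift ![x, y, z] = PresentedGroup.mk gamma22Rels := by
    ext i
    fin_cases i <;> rfl
  refine IsGamma22Triple.iff_lift_eq_one.mpr fun r hr => ?_
  exact (DFunLike.congr_fun lift_eq_mk r).trans (PresentedGroup.one_of_mem hr)

section Lift

variable {G : Type*} [Group G] {a b c : G}

/-- The universal property of `Γ_{2,2}`: the homomorphism with `x ↦ a`, `y ↦ b`, `z ↦ c`. -/
def lift (h : IsGamma22Triple a b c) : Gamma22 →* G :=
  PresentedGroup.toGroup (IsGamma22Triple.iff_lift_eq_one.mp h)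

@[simp]
lemma lift_x (h : IsGamma22Triple a b c) : lift h x = a :=
  PresentedGroup.toGroup.of _

@[simp]
lemma lift_y (h : IsGamma22Triple a b c) : lift h y = b :=
  PresentedGroup.toGroup.of _

@[simp]
lemma lift_z (h : IsGamma22Triple a b c) : lift h z = c :=
  PresentedGroup.toGroup.of _

lemma hom_ext {f g : Gamma22 →* G} (hx : f x = g x) (hy : f y = g y) : f = g := by
  have hz : f z = g z := by
    rw [isGamma22Triple.thd_eq_mul_sq, map_pow, map_pow, map_mul, map_mul, hx, hy]
  refine PresentedGroup.ext fun i => ?_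
  fin_cases i
  exacts [hx, hy, hz]

end Lift

lemma x_ne_one : x ≠ 1 := by
  have h : IsGamma22Triple (Multiplicative.ofAdd (1 : ZMod 7)) (Multiplicative.ofAdd 1)⁻¹ 1 :=
    .self_inv_one (by decide)
  intro hx
  have : Multiplicative.ofAdd (1 : ZMod 7) = 1 := by rw [← lift_x h, hx, map_one]
  exact absurd this (by decide)

/-- The endomorphism of `Γ_{2,2}` with `x ↦ x²`, `y ↦ y²`, `z ↦ y x`. -/
def squaringEnd : Monoid.End Gamma22 :=
  lift isGamma22Triple.sq_sq_mul

lemma squaringEnd_x : squaringEnd x = x ^ 2 :=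
  lift_x _

lemma squaringEnd_y : squaringEnd y = y ^ 2 :=
  lift_y _

lemma squaringEnd_z : squaringEnd z = y * x :=
  lift_z _

lemma squaringEnd_pow_three : squaringEnd ^ 3 = 1 := by
  apply hom_ext
  · calc
      (squaringEnd ^ 3) x = x ^ 2 ^ 3 := end_pow_apply_eq_pow_pow squaringEnd_x 3
      _ = x := by rw [show 2 ^ 3 = 7 + 1 from rfl, pow_succ, isGamma22Triple.fst_pow_seven, one_mul]
  · calc
      (squaringEnd ^ 3) y = y ^ 2 ^ 3 := end_pow_apply_eq_pow_pow squaringEnd_y 3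
      _ = y := by rw [show 2 ^ 3 = 7 + 1 from rfl, pow_succ, isGamma22Triple.snd_pow_seven, one_mul]

/-- `squaringEnd` as an automorphism, with inverse its square. -/
def squaringAut : MulAut Gamma22 :=
  MonoidHom.toMulEquiv squaringEnd (squaringEnd ^ 2) squaringEnd_pow_three squaringEnd_pow_three

lemma squaringAut_pow_three : squaringAut ^ 3 = 1 :=
  MulEquiv.ext fun g => DFunLike.congr_fun squaringEnd_pow_three g

lemma squaringAut_ne_one : squaringAut ≠ 1 := by
  intro h
  have hx : x ^ 2 = x := squaringEnd_x.symm.trans (DFunLike.congr_fun h x)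
  exact x_ne_one (by rwa [sq, mul_eq_left] at hx)

lemma orderOf_squaringAut : orderOf squaringAut = 3 :=
  have : Fact (Nat.Prime 3) := ⟨Nat.prime_three⟩
  orderOf_eq_prime squaringAut_pow_three squaringAut_ne_one

end Gamma22

/-- There is an automorphism `φ` of `Γ_{2,2}` with `φ(x) = x²`, `φ(y) = y²`,
`φ(z) = y x`, and `φ` has order exactly `3` in `Aut(Γ_{2,2})`. -/
theorem gamma22_automorphism :
    ∃ φ : MulAut Gamma22,
      φ (PresentedGroup.of 0) = PresentedGroup.of 0 ^ 2 ∧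
      φ (PresentedGroup.of 1) = PresentedGroup.of 1 ^ 2 ∧
      φ (PresentedGroup.of 2) = PresentedGroup.of 1 * PresentedGroup.of 0 ∧
      orderOf φ = 3 :=
  ⟨Gamma22.squaringAut, Gamma22.squaringEnd_x, Gamma22.squaringEnd_y,
   Gamma22.squaringEnd_z, Gamma22.orderOf_squaringAut⟩
end

section
/- The group with presentation ⟨x, y, z, a ∣ x⁷ = y⁷ = z⁷ = 1, x y z³ = 1, x³ y³ z = 1, a³ = 1, x a = a x², y a = a y², z a = a y x⟩ is isomorphic to the group with presentation ⟨a, b, c ∣ a³ = b³ = c³ = 1, (a b)² = b a, (a c)² = c a, c² b = (b c²)²⟩. -/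
/-- Relators of `Γ̂_{2,2}`: generators `x, y, z, a` (indexed by `0, 1, 2, 3 : Fin 4`) with
relators `x⁷`, `y⁷`, `z⁷`, `x y z³`, `x³ y³ z`, `a³`, `x a (a x²)⁻¹`, `y a (a y²)⁻¹`,
`z a (a y x)⁻¹`, encoding the relations `xa = ax²`, `ya = ay²`, `za = ayx`. -/
def gammaHatRels : Set (FreeGroup (Fin 4)) :=
  {FreeGroup.of 0 ^ 7, FreeGroup.of 1 ^ 7, FreeGroup.of 2 ^ 7,
    FreeGroup.of 0 * FreeGroup.of 1 * FreeGroup.of 2 ^ 3,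
    FreeGroup.of 0 ^ 3 * FreeGroup.of 1 ^ 3 * FreeGroup.of 2,
    FreeGroup.of 3 ^ 3,
    FreeGroup.of 0 * FreeGroup.of 3 * (FreeGroup.of 3 * FreeGroup.of 0 ^ 2)⁻¹,
    FreeGroup.of 1 * FreeGroup.of 3 * (FreeGroup.of 3 * FreeGroup.of 1 ^ 2)⁻¹,
    FreeGroup.of 2 * FreeGroup.of 3 * (FreeGroup.of 3 * FreeGroup.of 1 * FreeGroup.of 0)⁻¹}

/-- Relators of the Köhler–Meixner–Wester/Ronan lattice `Γ_{R4}`: generators `a, b, c`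
(indexed by `0, 1, 2 : Fin 3`) with relators `a³`, `b³`, `c³`, `(ab)²(ba)⁻¹`, `(ac)²(ca)⁻¹`
and `c²b ((bc²)²)⁻¹`. -/
def ronan4Rels : Set (FreeGroup (Fin 3)) :=
  {FreeGroup.of 0 ^ 3, FreeGroup.of 1 ^ 3, FreeGroup.of 2 ^ 3,
    (FreeGroup.of 0 * FreeGroup.of 1) ^ 2 * (FreeGroup.of 1 * FreeGroup.of 0)⁻¹,
    (FreeGroup.of 0 * FreeGroup.of 2) ^ 2 * (FreeGroup.of 2 * FreeGroup.of 0)⁻¹,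
    FreeGroup.of 2 ^ 2 * FreeGroup.of 1 * ((FreeGroup.of 1 * FreeGroup.of 2 ^ 2) ^ 2)⁻¹}

/-!
For `x = ab`, the relations `xa = ax²` and `(ab)² = ba` say the same thing, and either makes `b` a
conjugate of `a⁻¹`; together with `a³ = 1` they also force `x⁷ = 1`, so that `⟨a, x⟩` is a quotient
of the Frobenius group of order 21. `Γ_{R4}` consists of three copies of this relation, for the
pairs `(a, b)`, `(a, c)` and `(b, c²)`.

Substitute `x = ab` and `y = (ac)⁻¹`: the first two pairs give the relations of `a` with `x`, `y`.
For the third pair put `w = bc²`. Conjugation `g ↦ aga⁻¹` takes `w` to `xy`, and it takes `c²b = yx`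
to `z`. Hence `w² = c²b` amounts to `(xy)² = z`, which is what `xyz³ = 1` and `z⁷ = 1` express. The
remaining relation `z = (x³y³)⁻¹` serves to define `z`; it agrees with `za = ayx` because the same
conjugation takes `x⁶y⁶ = (yx)⁻¹` to `x³y³`.
-/

section Pairs

theorem pow_pow_eq_self_of_semiconjBy {M : Type*} [Monoid M] {a x : M} {k n : ℕ}
    (ha : a ^ n = 1) (h : SemiconjBy a (x ^ k) x) : x ^ k ^ n = x := by
  have iterate (m : ℕ) : SemiconjBy (a ^ m) (x ^ k ^ m) x := by
    induction m with
    | zero => simp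
    | succ m ih =>
      rw [pow_succ, pow_succ' k, pow_mul]
      exact ih.mul_left (by simpa only [← pow_mul, mul_comm] using h.pow_right (k ^ m))
  simpa only [ha, SemiconjBy, one_mul, mul_one] using iterate n

theorem pow_seven_eq_one_of_semiconjBy_sq {M : Type*} [LeftCancelMonoid M] {a x : M}
    (ha : a ^ 3 = 1) (h : SemiconjBy a (x ^ 2) x) : x ^ 7 = 1 := by
  have pow_eight : x ^ 8 = x := pow_pow_eq_self_of_semiconjBy ha h
  rwa [pow_succ', mul_eq_left] at pow_eight

theorem semiconjBy_mul_sq_iff {M : Type*} [LeftCancelMonoid M] {a b : M} :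
    SemiconjBy a ((a * b) ^ 2) (a * b) ↔ (a * b) ^ 2 = b * a := by
  rw [SemiconjBy, mul_assoc a b a, mul_right_inj]

theorem pow_eq_inv_of_pow_succ_eq_one {D : Type*} [DivisionMonoid D] {x : D} {n : ℕ}
    (h : x ^ (n + 1) = 1) : x ^ n = x⁻¹ :=
  eq_inv_of_mul_eq_one_left (by rwa [← pow_succ])

variable {G : Type*} [Group G] {a b x : G} {n : ℕ}

theorem semiconjBy_mul_inv_of_mul_sq (h : (a * b) ^ 2 = b * a) : SemiconjBy (b * a) b a⁻¹ := by
  rw [SemiconjBy, eq_inv_mul_iff_mul_eq, ← mul_assoc, ← mul_assoc, mul_assoc (a * b), ← sq]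
  exact h

theorem pow_eq_one_of_mul_sq (ha : a ^ n = 1) (h : (a * b) ^ 2 = b * a) : b ^ n = 1 :=
  ((semiconjBy_mul_inv_of_mul_sq h).pow_right n).eq_one_iff.2 (by rw [inv_pow, ha, inv_one])

theorem semiconjBy_inv_pow_iff : SemiconjBy a (x⁻¹ ^ n) x⁻¹ ↔ SemiconjBy a (x ^ n) x := by
  rw [inv_pow, SemiconjBy.inv_right_iff]

theorem semiconjBy_mul_inv_mul (a b c : G) : SemiconjBy a (b * c⁻¹) (a * b * (a * c)⁻¹) := by
  rw [SemiconjBy]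
  group

theorem mul_inv_mul_mul_cancel_left (a b c : G) : (a * c)⁻¹ * (a * b) = c⁻¹ * b := by
  group

end Pairs

/-- The defining relations of `Γ̂_{2,2}` for a quadruple of elements of a group. The last three
relations `xa = ax²`, `ya = ay²`, `za = ayx` are expressed through `SemiconjBy`. -/
structure IsGammaHatQuadruple {G : Type*} [Group G] (x y z a : G) : Prop where
  x_pow : x ^ 7 = 1
  y_pow : y ^ 7 = 1
  z_pow : z ^ 7 = 1
  mul_z_pow : x * y * z ^ 3 = 1
  pow_mul_z : x ^ 3 * y ^ 3 * z = 1
  a_pow : a ^ 3 = 1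
  semiconj_x : SemiconjBy a (x ^ 2) x
  semiconj_y : SemiconjBy a (y ^ 2) y
  semiconj_z : SemiconjBy a (y * x) z

/-- The defining relations of `Γ_{R4}` for a triple of elements of a group. -/
structure IsRonan4Triple {G : Type*} [Group G] (a b c : G) : Prop where
  a_pow : a ^ 3 = 1
  b_pow : b ^ 3 = 1
  c_pow : c ^ 3 = 1
  mul_sq_ab : (a * b) ^ 2 = b * a
  mul_sq_ac : (a * c) ^ 2 = c * a
  mul_sq_bc : c ^ 2 * b = (b * c ^ 2) ^ 2

section Translation

variable {G : Type*} [Group G] {a b c x y z : G}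

theorem IsGammaHatQuadruple.z_eq (h : IsGammaHatQuadruple x y z a) : z = (x ^ 3 * y ^ 3)⁻¹ :=
  eq_inv_of_mul_eq_one_right h.pow_mul_z

theorem IsGammaHatQuadruple.mul_sq_eq (h : IsGammaHatQuadruple x y z a) : (x * y) ^ 2 = z := by
  rw [eq_inv_of_mul_eq_one_left h.mul_z_pow, inv_pow, ← pow_mul,
    pow_eq_inv_of_pow_succ_eq_one h.z_pow, inv_inv]

theorem IsGammaHatQuadruple.isRonan4Triple (h : IsGammaHatQuadruple (a * b) (a * c)⁻¹ z a) :
    IsRonan4Triple a b c := by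
  have mul_sq_ab : (a * b) ^ 2 = b * a := semiconjBy_mul_sq_iff.1 h.semiconj_x
  have mul_sq_ac : (a * c) ^ 2 = c * a :=
    semiconjBy_mul_sq_iff.1 (semiconjBy_inv_pow_iff.1 h.semiconj_y)
  have c_pow : c ^ 3 = 1 := pow_eq_one_of_mul_sq h.a_pow mul_sq_ac
  refine ⟨h.a_pow, pow_eq_one_of_mul_sq h.a_pow mul_sq_ab, c_pow, mul_sq_ab, mul_sq_ac, ?_⟩
  have semiconj_sq : SemiconjBy a ((b * c⁻¹) ^ 2) z :=
    h.mul_sq_eq ▸ (semiconjBy_mul_inv_mul a b c).pow_right 2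
  have semiconj_z : SemiconjBy a (c⁻¹ * b) z := mul_inv_mul_mul_cancel_left a b c ▸ h.semiconj_z
  rw [pow_eq_inv_of_pow_succ_eq_one c_pow]
  exact mul_left_cancel (semiconj_z.eq.trans semiconj_sq.eq.symm)

theorem IsRonan4Triple.semiconjBy_ab_sq (h : IsRonan4Triple a b c) :
    SemiconjBy a ((a * b) ^ 2) (a * b) :=
  semiconjBy_mul_sq_iff.2 h.mul_sq_ab

theorem IsRonan4Triple.semiconjBy_ac_inv_sq (h : IsRonan4Triple a b c) :
    SemiconjBy a ((a * c)⁻¹ ^ 2) (a * c)⁻¹ :=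
  semiconjBy_inv_pow_iff.2 (semiconjBy_mul_sq_iff.2 h.mul_sq_ac)

theorem IsRonan4Triple.ab_pow_seven (h : IsRonan4Triple a b c) : (a * b) ^ 7 = 1 :=
  pow_seven_eq_one_of_semiconjBy_sq h.a_pow h.semiconjBy_ab_sq

theorem IsRonan4Triple.ac_inv_pow_seven (h : IsRonan4Triple a b c) : (a * c)⁻¹ ^ 7 = 1 :=
  pow_seven_eq_one_of_semiconjBy_sq h.a_pow h.semiconjBy_ac_inv_sq

theorem IsRonan4Triple.semiconjBy_ac_inv_mul_ab (h : IsRonan4Triple a b c) :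
    SemiconjBy a ((a * c)⁻¹ * (a * b)) ((a * b) ^ 3 * (a * c)⁻¹ ^ 3)⁻¹ := by
  have x_pow_six : ((a * b) ^ 2) ^ 3 = (a * b)⁻¹ := by
    rw [← pow_mul, pow_eq_inv_of_pow_succ_eq_one h.ab_pow_seven]
  have y_pow_six : ((a * c)⁻¹ ^ 2) ^ 3 = (a * c)⁻¹⁻¹ := by
    rw [← pow_mul, pow_eq_inv_of_pow_succ_eq_one h.ac_inv_pow_seven]
  have semiconj_cubes :=
    (h.semiconjBy_ab_sq.pow_right 3).mul_right (h.semiconjBy_ac_inv_sq.pow_right 3)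
  rwa [x_pow_six, y_pow_six, ← mul_inv_rev, ← SemiconjBy.inv_right_iff,
    inv_inv] at semiconj_cubes

theorem IsRonan4Triple.bc_inv_sq_eq (h : IsRonan4Triple a b c) :
    (b * c⁻¹) ^ 2 = (a * c)⁻¹ * (a * b) := by
  rw [mul_inv_mul_mul_cancel_left, ← pow_eq_inv_of_pow_succ_eq_one h.c_pow, h.mul_sq_bc]

theorem IsRonan4Triple.bc_inv_pow_seven (h : IsRonan4Triple a b c) : (b * c⁻¹) ^ 7 = 1 := by
  rw [← pow_eq_inv_of_pow_succ_eq_one h.c_pow]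
  exact pow_seven_eq_one_of_semiconjBy_sq h.b_pow (semiconjBy_mul_sq_iff.2 h.mul_sq_bc.symm)

theorem IsRonan4Triple.isGammaHatQuadruple (h : IsRonan4Triple a b c) :
    IsGammaHatQuadruple (a * b) (a * c)⁻¹ ((a * b) ^ 3 * (a * c)⁻¹ ^ 3)⁻¹ a := by
  have semiconj_z : SemiconjBy a ((b * c⁻¹) ^ 2) ((a * b) ^ 3 * (a * c)⁻¹ ^ 3)⁻¹ :=
    h.bc_inv_sq_eq ▸ h.semiconjBy_ac_inv_mul_ab
  refine ⟨h.ab_pow_seven, h.ac_inv_pow_seven, (semiconj_z.pow_right 7).eq_one_iff.1 ?_,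
    ((semiconjBy_mul_inv_mul a b c).mul_right (semiconj_z.pow_right 3)).eq_one_iff.1 ?_,
    mul_inv_cancel _, h.a_pow, h.semiconjBy_ab_sq, h.semiconjBy_ac_inv_sq,
    h.semiconjBy_ac_inv_mul_ab⟩
  · rw [pow_right_comm, h.bc_inv_pow_seven, one_pow]
  · rw [← pow_mul, ← pow_succ', h.bc_inv_pow_seven]

end Translation

section Presentations

theorem lift_presentedGroup_of_eq_one_of_mem {α : Type*} {rels : Set (FreeGroup α)}
    {r : FreeGroup α} (h : r ∈ rels) : FreeGroup.lift (PresentedGroup.of (rels := rels)) r = 1 := by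
  have lift_of : FreeGroup.lift (PresentedGroup.of (rels := rels)) = PresentedGroup.mk rels :=
    FreeGroup.ext_hom _ _ fun _ ↦ FreeGroup.lift_apply_of
  rw [lift_of, PresentedGroup.one_of_mem h]

variable {G : Type*} [Group G]

theorem forall_gammaHatRels_lift_eq_one_iff {f : Fin 4 → G} :
    (∀ r ∈ gammaHatRels, FreeGroup.lift f r = 1) ↔
      IsGammaHatQuadruple (f 0) (f 1) (f 2) (f 3) := by
  simp only [gammaHatRels, Set.mem_insert_iff, Set.mem_singleton_iff, forall_eq_or_imp, forall_eq,
    map_mul, map_pow, map_inv, FreeGroup.lift_apply_of, mul_inv_eq_one]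
  exact ⟨fun ⟨hx, hy, hz, hxyz, hxyz', ha, hxa, hya, hza⟩ ↦
      ⟨hx, hy, hz, hxyz, hxyz', ha, hxa.symm, hya.symm, by rw [SemiconjBy, hza, mul_assoc]⟩,
    fun h ↦ ⟨h.x_pow, h.y_pow, h.z_pow, h.mul_z_pow, h.pow_mul_z, h.a_pow, h.semiconj_x.symm,
      h.semiconj_y.symm, by rw [mul_assoc, h.semiconj_z.eq]⟩⟩

theorem forall_ronan4Rels_lift_eq_one_iff {f : Fin 3 → G} :
    (∀ r ∈ ronan4Rels, FreeGroup.lift f r = 1) ↔ IsRonan4Triple (f 0) (f 1) (f 2) := by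
  simp only [ronan4Rels, Set.mem_insert_iff, Set.mem_singleton_iff, forall_eq_or_imp, forall_eq,
    map_mul, map_pow, map_inv, FreeGroup.lift_apply_of, mul_inv_eq_one]
  exact ⟨fun ⟨ha, hb, hc, hab, hac, hbc⟩ ↦ ⟨ha, hb, hc, hab, hac, hbc⟩,
    fun h ↦ ⟨h.a_pow, h.b_pow, h.c_pow, h.mul_sq_ab, h.mul_sq_ac, h.mul_sq_bc⟩⟩

theorem isGammaHatQuadruple_of : IsGammaHatQuadruple
    (.of 0 : PresentedGroup gammaHatRels) (.of 1) (.of 2) (.of 3) :=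
  forall_gammaHatRels_lift_eq_one_iff.1 fun _ ↦ lift_presentedGroup_of_eq_one_of_mem

theorem isRonan4Triple_of : IsRonan4Triple
    (.of 0 : PresentedGroup ronan4Rels) (.of 1) (.of 2) :=
  forall_ronan4Rels_lift_eq_one_iff.1 fun _ ↦ lift_presentedGroup_of_eq_one_of_mem

theorem IsGammaHatQuadruple.exists_monoidHom {x y z a : G} (h : IsGammaHatQuadruple x y z a) :
    ∃ φ : PresentedGroup gammaHatRels →* G,
      φ (.of 0) = x ∧ φ (.of 1) = y ∧ φ (.of 2) = z ∧ φ (.of 3) = a :=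
  ⟨PresentedGroup.toGroup (f := ![x, y, z, a]) (forall_gammaHatRels_lift_eq_one_iff.2 h),
    PresentedGroup.toGroup.of _, PresentedGroup.toGroup.of _, PresentedGroup.toGroup.of _,
    PresentedGroup.toGroup.of _⟩

theorem IsRonan4Triple.exists_monoidHom {a b c : G} (h : IsRonan4Triple a b c) :
    ∃ φ : PresentedGroup ronan4Rels →* G, φ (.of 0) = a ∧ φ (.of 1) = b ∧ φ (.of 2) = c :=
  ⟨PresentedGroup.toGroup (f := ![a, b, c]) (forall_ronan4Rels_lift_eq_one_iff.2 h),
    PresentedGroup.toGroup.of _, PresentedGroup.toGroup.of _, PresentedGroup.toGroup.of _⟩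

end Presentations

/-- The extension `Γ̂_{2,2}` of `Γ_{2,2}` is isomorphic to the chamber-regular
lattice `Γ_{R4}`. -/
theorem gammaHat_iso_ronan4 :
    Nonempty (PresentedGroup gammaHatRels ≃* PresentedGroup ronan4Rels) := by
  have hat := isGammaHatQuadruple_of
  have ronan_in_hat : IsRonan4Triple (.of 3 : PresentedGroup gammaHatRels)
      ((.of 3)⁻¹ * .of 0) ((.of 3)⁻¹ * (.of 1)⁻¹) :=
    IsGammaHatQuadruple.isRonan4Triple (by simpa only [mul_inv_cancel_left, inv_inv] using hat)
  obtain ⟨toRonan, hx, hy, -, ha⟩ := isRonan4Triple_of.isGammaHatQuadruple.exists_monoidHom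
  obtain ⟨toHat, ha', hb, hc⟩ := ronan_in_hat.exists_monoidHom
  refine ⟨toRonan.toMulEquiv toHat (PresentedGroup.ext fun i ↦ ?_) (PresentedGroup.ext fun i ↦ ?_)⟩
  · fin_cases i <;> simp [hx, hy, ha, ha', hb, hc, hat.z_eq]
  · fin_cases i <;> simp [hx, hy, ha, ha', hb, hc]
end

section
/- Let A = {n ∈ ℕ : for every i ∈ ℕ, if 4 divides ⌊n/2^i⌋ then ⌊n/2^i⌋ = 0} (the natural numbers, including 0, whose binary expansion contains no two consecutive zeros), and let B = {n ∈ A : n is odd}. Then (1) B = {2i + 1 : i ∈ A}, and (2) A is the disjoint union of B, 2B = {2b : b ∈ B}, and {0}. -/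
/-!
Deleting the last binary digit of `n` is `n ↦ n / 2`, so a number avoids double zeros exactly when
its last two digits are not both zero and the number left after deleting the last one avoids double
zeros. Hence the digit `1` may be appended to any such number, while the digit `0` may be appended
only after a `1`, or to `0` itself, where it changes nothing.
-/

theorem forall_div_pow_iff (p : ℕ → Prop) (b n : ℕ) :
    (∀ i, p (n / b ^ i)) ↔ p n ∧ ∀ i, p (n / b / b ^ i) := by
  simp only [Nat.div_div_eq_div_mul, ← pow_succ']
  rw [← Nat.and_forall_add_one, pow_zero, Nat.div_one]

/-- The natural numbers whose binary expansion has no two consecutive zeros. The quotients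
`n / 2 ^ i` are the numbers spelled by the leading digits of `n`; divisibility of such a prefix by
`4` says that it ends in `00`, unless `i` is so large that the prefix is `0`. -/
def noDoubleZero : Set ℕ := {n | ∀ i : ℕ, 4 ∣ n / 2 ^ i → n / 2 ^ i = 0}

namespace noDoubleZero

theorem mem_iff_div_two_mem {n : ℕ} :
    n ∈ noDoubleZero ↔ (4 ∣ n → n = 0) ∧ n / 2 ∈ noDoubleZero :=
  forall_div_pow_iff (fun m => 4 ∣ m → m = 0) 2 n

theorem zero_mem : 0 ∈ noDoubleZero := fun i _ => Nat.zero_div (2 ^ i)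

theorem two_mul_add_one_mem_iff {n : ℕ} : 2 * n + 1 ∈ noDoubleZero ↔ n ∈ noDoubleZero := by
  have last_digits : 4 ∣ 2 * n + 1 → 2 * n + 1 = 0 := by omega
  have delete_last : (2 * n + 1) / 2 = n := by omega
  rw [mem_iff_div_two_mem, delete_last, and_iff_right last_digits]

theorem two_mul_mem_iff {n : ℕ} :
    2 * n ∈ noDoubleZero ↔ (n ∈ noDoubleZero ∧ Odd n) ∨ n = 0 := by
  have last_digits : (4 ∣ 2 * n → 2 * n = 0) ↔ Odd n ∨ n = 0 := by
    rw [Nat.odd_iff]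
    omega
  have delete_last : 2 * n / 2 = n := by omega
  have mem_of_eq_zero : n = 0 → n ∈ noDoubleZero := fun h => h ▸ zero_mem
  rw [mem_iff_div_two_mem, delete_last, last_digits]
  tauto

theorem sep_odd_eq_image :
    {n ∈ noDoubleZero | Odd n} = (fun i => 2 * i + 1) '' noDoubleZero := by
  ext n
  constructor
  · rintro ⟨hn, i, rfl⟩
    exact ⟨i, two_mul_add_one_mem_iff.1 hn, rfl⟩
  · rintro ⟨i, hi, rfl⟩
    exact ⟨two_mul_add_one_mem_iff.2 hi, i, rfl⟩

theorem eq_sep_odd_union_image_union_zero :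
    noDoubleZero = {n ∈ noDoubleZero | Odd n} ∪
      (fun b => 2 * b) '' {n ∈ noDoubleZero | Odd n} ∪ {0} := by
  apply Set.Subset.antisymm
  · intro n hn
    obtain ⟨m, rfl | rfl⟩ := n.even_or_odd'
    · rcases two_mul_mem_iff.1 hn with hm | rfl
      · exact .inl (.inr ⟨m, hm, rfl⟩)
      · exact .inr rfl
    · exact .inl (.inl ⟨hn, odd_two_mul_add_one m⟩)
  · rintro n ((hn | ⟨b, hb, rfl⟩) | rfl)
    · exact hn.1
    · exact two_mul_mem_iff.2 (.inl hb)
    · exact zero_mem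

end noDoubleZero

theorem disjoint_sep_odd_image_two_mul (s t : Set ℕ) :
    Disjoint {n ∈ s | Odd n} ((fun b => 2 * b) '' t) := by
  rw [Set.disjoint_left]
  rintro _ ⟨_, hodd⟩ ⟨b, _, rfl⟩
  exact Nat.not_odd_iff_even.2 (even_two_mul b) hodd

theorem disjoint_sep_odd_zero (s : Set ℕ) : Disjoint {n ∈ s | Odd n} {0} :=
  Set.disjoint_singleton_right.2 fun h => Nat.not_odd_zero h.2

theorem disjoint_image_mul_left_zero {M₀ : Type*} [MulZeroClass M₀] [IsLeftCancelMulZero M₀]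
    {a : M₀} (ha : a ≠ 0) {s : Set M₀} (hs : Disjoint s {0}) :
    Disjoint ((fun b => a * b) '' s) {0} := by
  simpa only [Set.image_singleton, mul_zero] using
    (Set.disjoint_image_iff (mul_right_injective₀ ha)).2 hs

/-- Let `A` be the set of natural numbers whose binary expansion contains no
two consecutive zeros (including `0`), and `B` the set of odd elements of `A`. Then
`B = {2i + 1 : i ∈ A}` and `A` is the disjoint union of `B`, `2B` and `{0}`. -/
theorem binary_no_double_zero_sets :
    let A : Set ℕ := {n | ∀ i : ℕ, 4 ∣ n / 2 ^ i → n / 2 ^ i = 0}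
    let B : Set ℕ := {n ∈ A | Odd n}
    B = (fun i => 2 * i + 1) '' A ∧
    A = B ∪ (fun b => 2 * b) '' B ∪ {0} ∧
    Disjoint B ((fun b => 2 * b) '' B) ∧
    Disjoint B ({0} : Set ℕ) ∧
    Disjoint ((fun b => 2 * b) '' B) ({0} : Set ℕ) := by
  intro A B
  have B_disjoint_zero : Disjoint B {0} := disjoint_sep_odd_zero A
  exact ⟨noDoubleZero.sep_odd_eq_image,
    noDoubleZero.eq_sep_odd_union_image_union_zero,
    disjoint_sep_odd_image_two_mul A B,
    B_disjoint_zero,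
    disjoint_image_mul_left_zero two_ne_zero B_disjoint_zero⟩
end

section
/- Let A = {n ∈ ℕ : for every i ∈ ℕ, if 4 divides ⌊n/2^i⌋ then ⌊n/2^i⌋ = 0} (the natural numbers, including 0, whose binary expansion contains no two consecutive zeros), and let B = {n ∈ A : n is odd}. Let α, β ∈ 𝔽₂⟦t⟧ be the formal power series over the field with two elements whose n-th coefficient equals 1 exactly when n ∈ A, respectively n ∈ B, and 0 otherwise. Then t·α² = β and α + β + β² = 1 in 𝔽₂⟦t⟧. -/
/-!
Let `A` be the set of naturals without two consecutive binary zeros and `B` its odd part. Appending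
the digit `1` preserves membership in `A`, so `B = 2A + 1`; appending `0` to a positive element of
`A` stays in `A` exactly when that element is odd, so `A = {0} ⊔ B ⊔ 2B`. In characteristic `2` the
square of the series `∑_{n ∈ S} tⁿ` is `∑_{n ∈ 2S} tⁿ`, which turns the two decompositions into
`β = t·α²` and `α = 1 + β + β²`.
-/

open scoped Classical

/-- The power series `α ∈ 𝔽₂⟦t⟧` whose `n`-th coefficient is `1` exactly when the binary
expansion of `n` contains no two consecutive zeros. -/
noncomputable def alphaSeries : PowerSeries (ZMod 2) :=
  PowerSeries.mk fun n => if ∀ i : ℕ, 4 ∣ n / 2 ^ i → n / 2 ^ i = 0 then 1 else 0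

/-- The power series `β ∈ 𝔽₂⟦t⟧` whose `n`-th coefficient is `1` exactly when `n` is odd and
the binary expansion of `n` contains no two consecutive zeros. -/
noncomputable def betaSeries : PowerSeries (ZMod 2) :=
  PowerSeries.mk fun n =>
    if (∀ i : ℕ, 4 ∣ n / 2 ^ i → n / 2 ^ i = 0) ∧ Odd n then 1 else 0

section IndicatorSeries

open PowerSeries

/-- The generating series `∑_{n ∈ s} Xⁿ` of a set `s` of natural numbers. -/
noncomputable def indicatorSeries (R : Type*) [Semiring R] (s : Set ℕ) : PowerSeries R :=
  mk (s.indicator 1)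

section Semiring

variable {R : Type*} [Semiring R]

theorem coeff_indicatorSeries (s : Set ℕ) (n : ℕ) :
    coeff n (indicatorSeries R s) = s.indicator 1 n :=
  coeff_mk _ _

theorem indicatorSeries_singleton_zero : indicatorSeries R {0} = 1 := by
  ext n
  simp [coeff_indicatorSeries, coeff_one, Set.indicator_apply]

theorem indicatorSeries_union {s t : Set ℕ} (h : Disjoint s t) :
    indicatorSeries R (s ∪ t) = indicatorSeries R s + indicatorSeries R t := by
  ext n
  simp [coeff_indicatorSeries, Set.indicator_union_of_disjoint h]

theorem X_mul_indicatorSeries (s : Set ℕ) :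
    X * indicatorSeries R s = indicatorSeries R ((· + 1) '' s) := by
  ext n
  cases n with
  | zero => simp [coeff_indicatorSeries]
  | succ n => simp [coeff_succ_X_mul, coeff_indicatorSeries, Set.indicator_apply]

end Semiring

theorem expand_indicatorSeries {R : Type*} [CommRing R] {p : ℕ} (hp : p ≠ 0) (s : Set ℕ) :
    expand p hp (indicatorSeries R s) = indicatorSeries R ((p * ·) '' s) := by
  ext n
  by_cases hn : p ∣ n
  · obtain ⟨m, rfl⟩ := hn
    simp [coeff_indicatorSeries, Set.indicator_apply, hp]
  · have hns : n ∉ (p * ·) '' s := by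
      rintro ⟨m, -, rfl⟩
      exact hn (dvd_mul_right p m)
    rw [coeff_expand_of_not_dvd p hp _ hn, coeff_indicatorSeries, Set.indicator_of_notMem hns]

theorem map_indicatorSeries {R S : Type*} [Semiring R] [Semiring S] (f : R →+* S) (s : Set ℕ) :
    map f (indicatorSeries R s) = indicatorSeries S s := by
  ext n
  simp [coeff_indicatorSeries, Set.indicator_apply, apply_ite f]

theorem indicatorSeries_pow_expChar {R : Type*} [CommRing R] (p : ℕ) [ExpChar R p] (s : Set ℕ) :
    indicatorSeries R s ^ p = indicatorSeries R ((p * ·) '' s) := by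
  have hp : p ≠ 0 := expChar_ne_zero R p
  calc indicatorSeries R s ^ p
      = map (frobenius R p) (expand p hp (indicatorSeries R s)) :=
        (MvPowerSeries.map_frobenius_expand p hp).symm
    _ = indicatorSeries R ((p * ·) '' s) := by
        rw [expand_indicatorSeries, map_indicatorSeries]

end IndicatorSeries

/-- The set `A` of natural numbers whose binary expansion has no two consecutive zeros, encoded as
in `alphaSeries`: a nonzero truncation `n / 2 ^ i` never ends in `00`. -/
def noConsecutiveZeros : Set ℕ :=
  {n | ∀ i : ℕ, 4 ∣ n / 2 ^ i → n / 2 ^ i = 0}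

/-- The set `B` of odd elements of `noConsecutiveZeros`. -/
def oddNoConsecutiveZeros : Set ℕ :=
  {n | n ∈ noConsecutiveZeros ∧ Odd n}

theorem mem_noConsecutiveZeros_iff_div_two {n : ℕ} :
    n ∈ noConsecutiveZeros ↔ (4 ∣ n → n = 0) ∧ n / 2 ∈ noConsecutiveZeros := by
  simp only [noConsecutiveZeros, Set.mem_ofPred_eq, Nat.div_div_eq_div_mul, ← pow_succ']
  exact Nat.and_forall_add_one.symm.trans (by simp)

theorem zero_mem_noConsecutiveZeros : 0 ∈ noConsecutiveZeros :=
  fun i _ => Nat.zero_div (2 ^ i)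

theorem two_mul_add_one_mem_noConsecutiveZeros {k : ℕ} :
    2 * k + 1 ∈ noConsecutiveZeros ↔ k ∈ noConsecutiveZeros := by
  have hdiv : (2 * k + 1) / 2 = k := by lia
  have hmod : ¬ 4 ∣ 2 * k + 1 := by lia
  simp [mem_noConsecutiveZeros_iff_div_two (n := 2 * k + 1), hdiv, hmod]

theorem two_mul_mem_noConsecutiveZeros {k : ℕ} :
    2 * k ∈ noConsecutiveZeros ↔ k = 0 ∨ k ∈ oddNoConsecutiveZeros := by
  rcases eq_or_ne k 0 with rfl | hk
  · simp [zero_mem_noConsecutiveZeros]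
  · have hdiv : 2 * k / 2 = k := by lia
    have hdvd : (4 ∣ 2 * k → 2 * k = 0) ↔ Odd k := by grind
    rw [mem_noConsecutiveZeros_iff_div_two, hdiv, hdvd]
    simp [oddNoConsecutiveZeros, hk, and_comm]

theorem oddNoConsecutiveZeros_eq_image :
    oddNoConsecutiveZeros = (· + 1) '' ((2 * ·) '' noConsecutiveZeros) := by
  ext n
  rw [Set.image_image]
  constructor
  · rintro ⟨hn, k, rfl⟩
    exact ⟨k, two_mul_add_one_mem_noConsecutiveZeros.mp hn, rfl⟩
  · rintro ⟨k, hk, rfl⟩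
    exact ⟨two_mul_add_one_mem_noConsecutiveZeros.mpr hk, k, rfl⟩

theorem noConsecutiveZeros_eq_union :
    noConsecutiveZeros = {0} ∪ oddNoConsecutiveZeros ∪ (2 * ·) '' oddNoConsecutiveZeros := by
  ext n
  obtain ⟨k, rfl | rfl⟩ := Nat.even_or_odd' n
  · have hodd : 2 * k ∉ oddNoConsecutiveZeros := fun h =>
      Nat.not_odd_iff_even.mpr (even_two_mul k) h.2
    simp [two_mul_mem_noConsecutiveZeros, hodd]
  · have himage : 2 * k + 1 ∉ (2 * ·) '' oddNoConsecutiveZeros := by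
      rintro ⟨m, -, h⟩
      lia
    have hmem : 2 * k + 1 ∈ oddNoConsecutiveZeros ↔ 2 * k + 1 ∈ noConsecutiveZeros :=
      and_iff_left (odd_two_mul_add_one k)
    simp only [Set.mem_union, Set.mem_singleton_iff, Nat.succ_ne_zero, himage, hmem, false_or,
      or_false]

theorem disjoint_singleton_zero_oddNoConsecutiveZeros :
    Disjoint {0} oddNoConsecutiveZeros :=
  Set.disjoint_singleton_left.mpr fun h => by simpa using h.2

theorem disjoint_union_image_two_mul_oddNoConsecutiveZeros :
    Disjoint ({0} ∪ oddNoConsecutiveZeros) ((2 * ·) '' oddNoConsecutiveZeros) := by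
  rw [Set.disjoint_right]
  rintro _ ⟨k, ⟨-, hk⟩, rfl⟩ (h | ⟨-, h⟩) <;> grind

theorem alphaSeries_eq_indicatorSeries :
    alphaSeries = indicatorSeries (ZMod 2) noConsecutiveZeros := by
  ext n
  simp [alphaSeries, coeff_indicatorSeries, Set.indicator_apply, noConsecutiveZeros]

theorem betaSeries_eq_indicatorSeries :
    betaSeries = indicatorSeries (ZMod 2) oddNoConsecutiveZeros := by
  ext n
  simp [betaSeries, coeff_indicatorSeries, Set.indicator_apply, oddNoConsecutiveZeros,
    noConsecutiveZeros]

theorem X_mul_alphaSeries_sq : PowerSeries.X * alphaSeries ^ 2 = betaSeries := by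
  rw [alphaSeries_eq_indicatorSeries, betaSeries_eq_indicatorSeries, indicatorSeries_pow_expChar,
    X_mul_indicatorSeries, oddNoConsecutiveZeros_eq_image]

theorem alphaSeries_eq_one_add : alphaSeries = 1 + betaSeries + betaSeries ^ 2 := by
  rw [alphaSeries_eq_indicatorSeries, betaSeries_eq_indicatorSeries, indicatorSeries_pow_expChar,
    noConsecutiveZeros_eq_union,
    indicatorSeries_union disjoint_union_image_two_mul_oddNoConsecutiveZeros,
    indicatorSeries_union disjoint_singleton_zero_oddNoConsecutiveZeros,
    indicatorSeries_singleton_zero]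

/-- The series `α` and `β` satisfy `t·α² = β` and `α + β + β² = 1`
in `𝔽₂⟦t⟧`. -/
theorem alpha_beta_relations :
    PowerSeries.X * alphaSeries ^ 2 = betaSeries ∧
    alphaSeries + betaSeries + betaSeries ^ 2 = 1 := by
  have : CharP (PowerSeries (ZMod 2)) 2 :=
    charP_of_injective_ringHom PowerSeries.C_injective 2
  refine ⟨X_mul_alphaSeries_sq, ?_⟩
  calc alphaSeries + betaSeries + betaSeries ^ 2
      = alphaSeries + (betaSeries + betaSeries ^ 2) := add_assoc _ _ _
    _ = 1 + (betaSeries + betaSeries ^ 2) + (betaSeries + betaSeries ^ 2) := by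
        rw [alphaSeries_eq_one_add, add_assoc 1]
    _ = 1 := CharTwo.add_cancel_right _ _
end

section
/- Let p be a prime, q = p^η a prime power with gcd(η, q² + q + 1) = 1 and q ≢ 1 (mod 3), and δ = q² + q + 1. Let F be a finite field with q elements and K = F((t)) the field of formal Laurent series over F. Then for every based difference matrix E with parameter q, every group homomorphism from Γ(E) to the group of ring automorphisms of K is trivial. -/
/-!
The lattice is generated by elements of order dividing `δ = q² + q + 1`, so it suffices that
`Aut F((t))` has no nontrivial element killed by `δ`. This holds for the fraction field `K` of any
Henselian discrete valuation ring `R` with residue field `k`, and any exponent `n` that is nonzero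
in `k`, as soon as neither `kˣ` nor `Aut k` has a nontrivial element killed by `n`:

* by Hensel's lemma, elements of `1 + 𝔪` have roots of all degrees nonzero in `k`, so every
  automorphism `σ` of `K` maps them into `Rˣ`; thus `σ 𝔪 ⊆ R`, and then `σ R ⊆ R`, as `σ a ∉ R`
  would make `σ (ϖ aⁱ)` leave `R` for large `i`;
* if `σ ^ n = 1`, then `σ` acts trivially on `k` and on `𝔪 / 𝔪²`, since it acts on the
  latter line by a scalar killed by `n`; hence it acts trivially on every `𝔪ⁱ / 𝔪ⁱ⁺¹`;
* if moreover `g = σ f - f ∈ 𝔪ⁱ`, then `0 = σⁿ f - f = ∑_{j < n} σʲ g ≡ n g` modulo `𝔪ⁱ⁺¹`, so that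
  `g ∈ 𝔪ⁱ⁺¹`. Therefore `g ∈ ⋂ 𝔪ⁱ = 0`.

When `k` has order `q = p ^ η`, the order `q - 1` of `kˣ` is prime to `δ = (q - 1) (q + 2) + 3`
because `3 ∤ q - 1`, and `Aut k` has order `η`.
-/

open IsLocalRing

section TrivialTorsion

/-- The monoid `G` has no `n`-torsion: `1` is its only element killed by `n`, so that
every group generated by elements killed by `n` maps trivially to `G`. For a field, this says that
there are no nontrivial `n`-th roots of unity. -/
def HasTrivialTorsion (n : ℕ) (G : Type*) [Monoid G] : Prop :=
  ∀ g : G, g ^ n = 1 → g = 1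

variable {n : ℕ} {G : Type*} [Group G]

theorem HasTrivialTorsion.of_coprime_card (h : (Nat.card G).Coprime n) : HasTrivialTorsion n G :=
  fun g hg ↦ orderOf_eq_one_iff.1 <|
    Nat.eq_one_of_dvd_coprimes h (orderOf_dvd_natCard g) (orderOf_dvd_of_pow_eq_one hg)

theorem HasTrivialTorsion.of_injective {M N : Type*} [Monoid M] [Monoid N] {φ : M →* N}
    (hφ : Function.Injective φ) (h : HasTrivialTorsion n N) : HasTrivialTorsion n M :=
  fun g hg ↦ (map_eq_one_iff φ hφ).1 <| h _ <| by rw [← map_pow, hg, map_one]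

theorem HasTrivialTorsion.of_units {M : Type*} [Monoid M] (hn : n ≠ 0)
    (h : HasTrivialTorsion n Mˣ) : HasTrivialTorsion n M :=
  fun g hg ↦ congrArg Units.val <| h (.ofPowEqOne g n hg hn) (Units.pow_ofPowEqOne hg hn)

theorem HasTrivialTorsion.monoidHom_eq_one {M : Type*} [Monoid M] (h : HasTrivialTorsion n M)
    {S : Set G} (hS : Subgroup.closure S = ⊤) (hpow : ∀ s ∈ S, s ^ n = 1) (f : G →* M) : f = 1 :=
  MonoidHom.eq_of_eqOn_dense hS fun s hs ↦ h _ <| by rw [← map_pow, hpow s hs, map_one]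

theorem pow_eq_one_of_semiconj {R S : Type*} [Semiring R] [Semiring S] {ι : R → S}
    (hι : Function.Injective ι) {τ : RingAut R} {σ : RingAut S} (h : Function.Semiconj ι τ σ)
    (hσ : σ ^ n = 1) : τ ^ n = 1 := by
  ext r
  apply hι
  rw [RingAut.coe_pow, h.iterate_right n r, ← RingAut.coe_pow, hσ]
  rfl

theorem HasTrivialTorsion.ringAut_congr {R S : Type*} [Semiring R] [Semiring S] (e : R ≃+* S)
    (h : HasTrivialTorsion n (RingAut R)) : HasTrivialTorsion n (RingAut S) := by
  intro σ hσ
  have hconj : Function.Semiconj e ((e.trans σ).trans e.symm) σ := fun r ↦ by simp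
  have hτ := h _ (pow_eq_one_of_semiconj e.injective hconj hσ)
  ext s
  rw [← e.apply_symm_apply s, ← hconj, hτ]
  rfl

end TrivialTorsion

section Unipotent

variable {R : Type*} [CommRing R] {I : Ideal R} {τ : R →+* R}

theorem map_sub_self_mem_pow_succ (h₀ : ∀ r, τ r - r ∈ I) (h₁ : ∀ r ∈ I, τ r - r ∈ I ^ 2)
    (i : ℕ) {r : R} (hr : r ∈ I ^ i) : τ r - r ∈ I ^ (i + 1) := by
  induction hr using Submodule.pow_induction_on_left' with
  | algebraMap r => simpa using h₀ r
  | add x y i _ _ hx hy =>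
    rw [map_add, add_sub_add_comm]
    exact add_mem hx hy
  | mem_mul a ha i x hx ih =>
    have hτx : τ x ∈ I ^ i := by
      simpa using add_mem (Ideal.pow_le_pow_right i.le_succ ih) hx
    have hfst : (τ a - a) * τ x ∈ I ^ (i + 2) := by
      rw [add_comm, pow_add]
      exact Ideal.mul_mem_mul (h₁ a ha) hτx
    have hsnd : a * (τ x - x) ∈ I ^ (i + 2) := by
      rw [pow_succ']
      exact Ideal.mul_mem_mul ha ih
    convert add_mem hfst hsnd using 1
    rw [map_mul]
    ring

theorem iterate_sub_self_mem_pow_succ (h : ∀ i, ∀ r ∈ I ^ i, τ r - r ∈ I ^ (i + 1))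
    {i : ℕ} {r : R} (hr : r ∈ I ^ i) (j : ℕ) : τ^[j] r - r ∈ I ^ (i + 1) := by
  induction j with
  | zero => simp
  | succ j ih =>
    have hmem : τ^[j] r ∈ I ^ i := by
      simpa using add_mem (Ideal.pow_le_pow_right i.le_succ ih) hr
    rw [Function.iterate_succ_apply', ← sub_add_sub_cancel _ (τ^[j] r)]
    exact add_mem (h i _ hmem) ih

theorem map_eq_self_of_iterate_eq_self [IsHausdorff I R] {n : ℕ} (hn : IsUnit (n : R))
    (h : ∀ i, ∀ r ∈ I ^ i, τ r - r ∈ I ^ (i + 1)) {f : R} (hf : τ^[n] f = f) : τ f = f := by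
  have hsum : ∑ j ∈ Finset.range n, τ^[j] (τ f - f) = 0 := by
    simp_rw [← RingHom.coe_pow, map_sub, RingHom.coe_pow, ← Function.iterate_succ_apply]
    rw [Finset.sum_range_sub (fun j ↦ τ^[j] f), hf, Function.iterate_zero_apply, sub_self]
  have hmem (i : ℕ) : τ f - f ∈ I ^ i := by
    induction i with
    | zero => simp
    | succ i ih =>
      have hdiff := sum_mem fun j (_ : j ∈ Finset.range n) ↦ iterate_sub_self_mem_pow_succ h ih j
      rw [Finset.sum_sub_distrib, hsum, zero_sub, neg_mem_iff, Finset.sum_const,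
        Finset.card_range, nsmul_eq_mul] at hdiff
      exact (Ideal.unit_mul_mem_iff_mem _ hn).1 hdiff
  refine sub_eq_zero.1 (IsHausdorff.haus ‹_› _ fun i ↦ ?_)
  simpa [SModEq.zero] using hmem i

end Unipotent

section Henselian

theorem exists_lt_natCast_ne_zero (A : Type*) [AddMonoidWithOne A] [NeZero (1 : A)] (N : ℕ) :
    ∃ n, N < n ∧ (n : A) ≠ 0 := by
  by_cases h : ((N + 1 : ℕ) : A) = 0
  · exact ⟨N + 2, by lia, by rw [Nat.cast_succ, h, zero_add]; exact one_ne_zero⟩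
  · exact ⟨N + 1, by lia, h⟩

theorem isUnit_natCast_of_residue_ne_zero {R : Type*} [CommRing R] [IsLocalRing R] {n : ℕ}
    (hn : (n : ResidueField R) ≠ 0) : IsUnit (n : R) :=
  (residue_ne_zero_iff_isUnit _).1 <| by rwa [map_natCast]

theorem exists_pow_eq_of_sub_one_mem_maximalIdeal {R : Type*} [CommRing R] [HenselianLocalRing R]
    {n : ℕ} (hn : IsUnit (n : R)) {u : R} (hu : u - 1 ∈ maximalIdeal R) : ∃ y, y ^ n = u := by
  have hn0 : n ≠ 0 := by
    rintro rfl
    simp at hn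
  obtain ⟨y, hy, -⟩ := HenselianLocalRing.is_henselian (Polynomial.X ^ n - Polynomial.C u)
    (Polynomial.monic_X_pow_sub_C u hn0) 1 (by simpa using neg_mem hu)
    (by simpa [Polynomial.derivative_X_pow] using hn)
  exact ⟨y, by simpa [sub_eq_zero] using hy⟩

theorem eq_zero_of_forall_exists_pow_dvd {S : Type*} [CommRing S] [IsNoetherianRing S]
    [IsLocalRing S] {x : S} (h : ∀ N, ∃ n > N, ∃ y ∈ maximalIdeal S, y ^ n ∣ x) : x = 0 := by
  refine IsHausdorff.haus (I := maximalIdeal S) inferInstance x fun N ↦ ?_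
  obtain ⟨n, hn, y, hy, hyx⟩ := h N
  simpa [SModEq.zero] using
    Ideal.mem_of_dvd _ hyx (Ideal.pow_le_pow_right hn.le (Ideal.pow_mem_pow hy n))

variable {S L : Type*} [CommRing S] [IsDomain S] [IsDiscreteValuationRing S] [Field L]
  [Algebra S L] [IsFractionRing S L]

theorem exists_mem_maximalIdeal_algebraMap_eq_inv {x : L} (hx : x ∉ (algebraMap S L).range) :
    ∃ z ∈ maximalIdeal S, algebraMap S L z = x⁻¹ := by
  obtain ⟨z, hz⟩ := (ValuationRing.isInteger_or_isInteger S x).resolve_left hx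
  refine ⟨z, fun hunit ↦ hx ?_, hz⟩
  obtain ⟨w, hw⟩ := hunit.exists_left_inv
  refine ⟨w, ?_⟩
  rw [← inv_inv x, ← hz]
  exact eq_inv_of_mul_eq_one_left (by rw [← map_mul, hw, map_one])

variable {R : Type*} [CommRing R] [HenselianLocalRing R]

theorem map_mem_range_of_sub_one_mem_maximalIdeal (φ : R →+* L) {u : R}
    (hu : u - 1 ∈ maximalIdeal R) : φ u ∈ (algebraMap S L).range := by
  by_contra hφu
  obtain ⟨z, -, hz⟩ := exists_mem_maximalIdeal_algebraMap_eq_inv hφu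
  have hz0 : z = 0 := by
    refine eq_zero_of_forall_exists_pow_dvd fun N ↦ ?_
    obtain ⟨n, hNn, hn⟩ := exists_lt_natCast_ne_zero (ResidueField R) N
    obtain ⟨y, rfl⟩ := exists_pow_eq_of_sub_one_mem_maximalIdeal
      (isUnit_natCast_of_residue_ne_zero hn) hu
    have hφy : φ y ∉ (algebraMap S L).range := fun hy ↦ hφu <| map_pow φ y n ▸ pow_mem hy n
    obtain ⟨w, hw, hwy⟩ := exists_mem_maximalIdeal_algebraMap_eq_inv hφy
    have hwz : w ^ n = z := IsFractionRing.injective S L <| by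
      rw [map_pow, hwy, hz, map_pow, inv_pow]
    exact ⟨n, hNn, w, hw, hwz.dvd⟩
  rw [hz0, map_zero, zero_eq_inv] at hz
  exact hφu (hz ▸ zero_mem _)

theorem map_mem_range_of_mem_maximalIdeal (φ : R →+* L) {x : R} (hx : x ∈ maximalIdeal R) :
    φ x ∈ (algebraMap S L).range := by
  have hu : φ (x + 1) ∈ (algebraMap S L).range :=
    map_mem_range_of_sub_one_mem_maximalIdeal φ (by simpa using hx)
  simpa using sub_mem hu (one_mem _)

theorem map_mem_range_of_injective (hR : ¬ IsField R) {φ : R →+* L} (hφ : Function.Injective φ)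
    (a : R) : φ a ∈ (algebraMap S L).range := by
  by_contra ha
  obtain ⟨z, hz, hza⟩ := exists_mem_maximalIdeal_algebraMap_eq_inv ha
  have hφa : φ a ≠ 0 := fun h ↦ ha (h ▸ zero_mem _)
  obtain ⟨ϖ, hϖ, hϖ0⟩ := Submodule.exists_mem_ne_zero_of_ne_bot
    (mt isField_iff_maximalIdeal_eq.2 hR)
  obtain ⟨s, hs⟩ := map_mem_range_of_mem_maximalIdeal (S := S) φ hϖ
  -- Multiplying `ϖ` by powers of `a` shows that `φ ϖ` is divisible by all powers of `(φ a)⁻¹`.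
  have hs0 : s = 0 := by
    refine eq_zero_of_forall_exists_pow_dvd fun N ↦ ⟨N + 1, N.lt_succ_self, z, hz, ?_⟩
    obtain ⟨b, hb⟩ := map_mem_range_of_mem_maximalIdeal (S := S) φ
      (Ideal.mul_mem_right (a ^ (N + 1)) _ hϖ)
    refine ⟨b, IsFractionRing.injective S L ?_⟩
    rw [map_mul, map_pow, hza, hb, hs, map_mul, map_pow, inv_pow]
    field_simp
  exact hϖ0 <| (map_eq_zero_iff φ hφ).1 <| by rw [← hs, hs0, map_zero]

end Henselian

section ResidueField

variable {R : Type*} [CommRing R] [IsLocalRing R]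

theorem residue_ringAut_apply {n : ℕ}
    (haut : HasTrivialTorsion n (RingAut (ResidueField R))) {τ : RingAut R} (hτ : τ ^ n = 1)
    (r : R) : residue R (τ r) = residue R r :=
  DFunLike.congr_fun (haut (ResidueField.mapAut τ) (by rw [← map_pow, hτ, map_one])) (residue R r)

theorem exists_iterate_eq_mul_of_residue_eq {τ : R →+* R}
    (hτ : ∀ r, residue R (τ r) = residue R r) {ϖ u : R} (hu : τ ϖ = u * ϖ) (j : ℕ) :
    ∃ w, τ^[j] ϖ = w * ϖ ∧ residue R w = residue R u ^ j := by
  induction j with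
  | zero => exact ⟨1, by simp⟩
  | succ j ih =>
    obtain ⟨w, hw, hres⟩ := ih
    refine ⟨τ w * u, ?_, by rw [map_mul, hτ, hres, pow_succ]⟩
    rw [Function.iterate_succ_apply', hw, map_mul, hu, mul_assoc]

end ResidueField

section FractionField

variable {R : Type*} [CommRing R] [IsDomain R] [IsDiscreteValuationRing R]

theorem exists_semiconj_algebraMap [HenselianLocalRing R] {K : Type*} [Field K] [Algebra R K]
    [IsFractionRing R K] (σ : RingAut K) :
    ∃ τ : RingAut R, Function.Semiconj (algebraMap R K) τ σ := by
  have hinj := IsFractionRing.injective R K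
  have hmap (σ : RingAut K) (r : R) : σ (algebraMap R K r) ∈ (algebraMap R K).range :=
    map_mem_range_of_injective (φ := σ.toRingHom.comp (algebraMap R K))
      (IsDiscreteValuationRing.not_isField R) (σ.injective.comp hinj) r
  have hrange : (algebraMap R K).range.map σ.toRingHom = (algebraMap R K).range := by
    refine le_antisymm ?_ ?_
    · rintro _ ⟨_, ⟨r, rfl⟩, rfl⟩
      exact hmap σ r
    · rintro _ ⟨r, rfl⟩
      exact ⟨_, hmap σ⁻¹ r, σ.apply_symm_apply _⟩
  let e : R ≃+* (algebraMap R K).range :=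
    RingEquiv.ofBijective (algebraMap R K).rangeRestrict
      ⟨fun _ _ h ↦ hinj (congrArg Subtype.val h), (algebraMap R K).rangeRestrict_surjective⟩
  refine ⟨(e.trans (σ.subringMap.trans (RingEquiv.subringCongr hrange))).trans e.symm, fun r ↦ ?_⟩
  exact congrArg Subtype.val (e.apply_symm_apply _)

variable {n : ℕ} {τ : RingAut R}

theorem ringAut_sub_self_mem_maximalIdeal_sq (hunits : HasTrivialTorsion n (ResidueField R))
    (hτ : ∀ r, residue R (τ r) = residue R r) (hpow : τ ^ n = 1) {r : R}
    (hr : r ∈ maximalIdeal R) : τ r - r ∈ maximalIdeal R ^ 2 := by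
  obtain ⟨ϖ, hϖ⟩ := IsDiscreteValuationRing.exists_irreducible R
  have hspan := hϖ.maximalIdeal_eq
  have hϖ_mem : ϖ ∈ maximalIdeal R := hspan ▸ Ideal.mem_span_singleton_self ϖ
  obtain ⟨u, hu⟩ : ∃ u, u * ϖ = τ ϖ := by
    rw [← Ideal.mem_span_singleton', ← hspan, ← residue_eq_zero_iff, hτ, residue_eq_zero_iff]
    exact hϖ_mem
  obtain ⟨w, hw, hres⟩ := exists_iterate_eq_mul_of_residue_eq (τ := τ.toRingHom) hτ hu.symm n
  have hw1 : w = 1 := by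
    refine mul_right_cancel₀ hϖ.ne_zero ?_
    rw [one_mul, ← hw]
    exact (congrFun (RingAut.coe_pow τ n) ϖ).symm.trans (by rw [hpow]; rfl)
  have hu1 : u - 1 ∈ maximalIdeal R := by
    rw [← residue_eq_zero_iff, map_sub, map_one, sub_eq_zero]
    exact hunits _ (by rw [← hres, hw1, map_one])
  obtain ⟨a, rfl⟩ := Ideal.mem_span_singleton'.1 (hspan ▸ hr)
  have ha : τ a - a ∈ maximalIdeal R := by rw [← residue_eq_zero_iff, map_sub, hτ, sub_self]
  have hsplit : τ (a * ϖ) - a * ϖ = (τ a * (u - 1) + (τ a - a)) * ϖ := by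
    rw [map_mul, ← hu]
    ring
  rw [hsplit, sq]
  exact Ideal.mul_mem_mul (add_mem (Ideal.mul_mem_left _ _ hu1) ha) hϖ_mem

theorem hasTrivialTorsion_ringAut_of_residueField (hn : (n : ResidueField R) ≠ 0)
    (hunits : HasTrivialTorsion n (ResidueField R))
    (haut : HasTrivialTorsion n (RingAut (ResidueField R))) : HasTrivialTorsion n (RingAut R) := by
  intro τ hτ
  have hres := residue_ringAut_apply haut hτ
  have hmod (r : R) : τ r - r ∈ maximalIdeal R := by
    rw [← residue_eq_zero_iff, map_sub, hres, sub_self]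
  have hsq (r : R) (hr : r ∈ maximalIdeal R) : τ r - r ∈ maximalIdeal R ^ 2 :=
    ringAut_sub_self_mem_maximalIdeal_sq hunits hres hτ hr
  ext f
  refine map_eq_self_of_iterate_eq_self (I := maximalIdeal R) (τ := τ.toRingHom)
    (isUnit_natCast_of_residue_ne_zero hn) (fun i _ ↦ map_sub_self_mem_pow_succ hmod hsq i) ?_
  exact (congrFun (RingAut.coe_pow τ n) f).symm.trans (by rw [hτ]; rfl)

theorem hasTrivialTorsion_ringAut_fractionField [HenselianLocalRing R] (K : Type*) [Field K]
    [Algebra R K] [IsFractionRing R K] (h : HasTrivialTorsion n (RingAut R)) :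
    HasTrivialTorsion n (RingAut K) := by
  intro σ hσ
  obtain ⟨τ, hτ⟩ := exists_semiconj_algebraMap (R := R) σ
  have hτ1 : τ = 1 := h τ (pow_eq_one_of_semiconj (IsFractionRing.injective R K) hτ hσ)
  have hσ_comp : σ.toRingHom.comp (algebraMap R K) = (RingHom.id K).comp (algebraMap R K) :=
    RingHom.ext fun r ↦ by
      rw [hτ1] at hτ
      exact (hτ r).symm
  exact RingEquiv.toRingHom_injective (IsLocalization.ringHom_ext (nonZeroDivisors R) hσ_comp)

end FractionField

section LaurentSeries

variable {F : Type*} [Field F]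

instance : HenselianLocalRing (PowerSeries F) where
  is_henselian f hf a ha hfa := by
    rw [PowerSeries.maximalIdeal_eq_span_X] at ha ⊢
    exact HenselianRing.is_henselian f hf a ha (hfa.map _)

theorem hasTrivialTorsion_ringAut_laurentSeries {n : ℕ} (hn : (n : F) ≠ 0)
    (hunits : HasTrivialTorsion n F) (haut : HasTrivialTorsion n (RingAut F)) :
    HasTrivialTorsion n (RingAut (LaurentSeries F)) := by
  let e : ResidueField (PowerSeries F) ≃+* F := PowerSeries.residueFieldOfPowerSeries
  have hn' : (n : ResidueField (PowerSeries F)) ≠ 0 := fun h ↦ hn (by simpa using congrArg e h)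
  exact hasTrivialTorsion_ringAut_fractionField (R := PowerSeries F) _ <|
    hasTrivialTorsion_ringAut_of_residueField hn'
      (hunits.of_injective (φ := e.toRingHom.toMonoidHom) e.injective) (haut.ringAut_congr e.symm)

end LaurentSeries

section FiniteField

variable {F : Type*} [Field F] [Finite F]

theorem natCard_ringAut_eq_of_natCard_eq_pow {p η : ℕ} (hp : p.Prime) (hF : Nat.card F = p ^ η) :
    Nat.card (RingAut F) = η := by
  have : Fact p.Prime := ⟨hp⟩
  have : Fintype F := .ofFinite F
  have : CharP F p := charP_of_card_eq_prime_pow (Fintype.card_eq_nat_card.trans hF)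
  let : Algebra (ZMod p) F := ZMod.algebra F p
  have hcomm (σ : RingAut F) (r : ZMod p) : σ (algebraMap _ F r) = algebraMap _ F r :=
    RingHom.congr_fun
      (Subsingleton.elim (σ.toRingHom.comp (algebraMap (ZMod p) F)) (algebraMap _ F)) r
  let e : RingAut F ≃ Gal(F/ZMod p) :=
    { toFun σ := AlgEquiv.ofRingEquiv (hcomm σ)
      invFun φ := φ.toRingEquiv }
  rw [Nat.card_congr e, IsGalois.card_aut_eq_finrank]
  have hfinrank := Module.natCard_eq_pow_finrank (K := ZMod p) (V := F)
  rw [hF, Nat.card_zmod] at hfinrank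
  exact (Nat.pow_right_injective hp.two_le hfinrank).symm

theorem hasTrivialTorsion_ringAut_of_natCard_eq_pow {p η n : ℕ} (hp : p.Prime)
    (hF : Nat.card F = p ^ η) (h : η.Coprime n) : HasTrivialTorsion n (RingAut F) :=
  .of_coprime_card <| by rwa [natCard_ringAut_eq_of_natCard_eq_pow hp hF]

theorem coprime_sub_one_sq_add_self_add_one {q : ℕ} (hq : 0 < q) (hmod : q % 3 ≠ 1) :
    (q - 1).Coprime (q ^ 2 + q + 1) := by
  obtain ⟨m, rfl⟩ := Nat.exists_eq_add_of_le' hq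
  have hdecomp : (m + 1) ^ 2 + (m + 1) + 1 = 3 + m * (m + 3) := by ring
  rw [Nat.add_sub_cancel, hdecomp, Nat.coprime_add_mul_left_right, Nat.coprime_comm,
    Nat.prime_three.coprime_iff_not_dvd]
  lia

theorem hasTrivialTorsion_sq_add_self_add_one {q : ℕ} (hF : Nat.card F = q) (hmod : q % 3 ≠ 1) :
    HasTrivialTorsion (q ^ 2 + q + 1) F :=
  .of_units (Nat.succ_ne_zero _) <| .of_coprime_card <| by
    rw [Nat.card_units, hF]
    exact coprime_sub_one_sq_add_self_add_one (hF ▸ Nat.card_pos) hmod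

theorem natCast_sq_add_self_add_one_ne_zero {q : ℕ} (hF : Nat.card F = q) :
    ((q ^ 2 + q + 1 : ℕ) : F) ≠ 0 := by
  have : Fintype F := .ofFinite F
  have hq : (q : F) = 0 := by
    rw [← hF, Nat.card_eq_fintype_card, FiniteField.cast_card_eq_zero]
  simp [hq]

end FiniteField

section SingerGroup

variable {q δ : ℕ} {E : Fin (q + 1) → ZMod 3 → ZMod δ}

/-- The generator `σⱼ` of the Singer cyclic lattice `Γ(E)`. -/
def SingerGroup.of (j : ZMod 3) : SingerGroup q δ E :=
  PresentedGroup.of (rels := singerRels q δ E) j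

theorem SingerGroup.closure_range_of :
    Subgroup.closure (Set.range (SingerGroup.of : ZMod 3 → SingerGroup q δ E)) = ⊤ :=
  PresentedGroup.closure_range_of (singerRels q δ E)

theorem SingerGroup.of_pow (j : ZMod 3) : (SingerGroup.of j : SingerGroup q δ E) ^ δ = 1 :=
  PresentedGroup.one_of_mem (rels := singerRels q δ E) (Or.inl ⟨j, rfl⟩)

end SingerGroup

theorem singer_to_laurent_aut_trivial_general {F : Type*} [Field F] {n : ℕ} (hn : (n : F) ≠ 0)
    (hunits : HasTrivialTorsion n F) (haut : HasTrivialTorsion n (RingAut F))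
    {G : Type*} [Group G] {S : Set G} (hS : Subgroup.closure S = ⊤) (hpow : ∀ s ∈ S, s ^ n = 1)
    (f : G →* RingAut (LaurentSeries F)) : f = 1 :=
  (hasTrivialTorsion_ringAut_laurentSeries hn hunits haut).monoidHom_eq_one hS hpow f

/-- Let `q = p^η` be a prime power with `gcd(η, q² + q + 1) = 1` and
`q ≢ 1 (mod 3)`, let `F` be a finite field with `q` elements and `K = F((t))` the field of
formal Laurent series over `F`. Then for every based difference matrix `E` with parameter `q`,
every group homomorphism from `Γ(E)` to the group of ring automorphisms of `K` is trivial. -/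
theorem singer_to_laurent_aut_trivial (p η q : ℕ) (hp : p.Prime) (hq : q = p ^ η)
    (hgcd : Nat.gcd η (q ^ 2 + q + 1) = 1) (hmod : q % 3 ≠ 1)
    (F : Type*) [Field F] [Fintype F] (hF : Fintype.card F = q)
    (E : Fin (q + 1) → ZMod 3 → ZMod (q ^ 2 + q + 1))
    (hE : IsDifferenceMatrix q (q ^ 2 + q + 1) E)
    (hB : IsBasedMatrix q (q ^ 2 + q + 1) E)
    (f : SingerGroup q (q ^ 2 + q + 1) E →* RingAut (LaurentSeries F)) :
    f = 1 := by
  have hcard : Nat.card F = q := Nat.card_eq_fintype_card.trans hF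
  exact singer_to_laurent_aut_trivial_general (natCast_sq_add_self_add_one_ne_zero hcard)
    (hasTrivialTorsion_sq_add_self_add_one hcard hmod)
    (hasTrivialTorsion_ringAut_of_natCard_eq_pow hp (hcard.trans hq) hgcd)
    SingerGroup.closure_range_of (Set.forall_mem_range.2 SingerGroup.of_pow) f
end

section
/- Let p be a prime and let K be a field that is a finite extension of the field ℚ_p of p-adic numbers (i.e., K is a ℚ_p-algebra of finite dimension as a ℚ_p-vector space, and a field). Then every ring automorphism of K fixes ℚ_p pointwise; in particular, every ring automorphism of ℚ_p is the identity. -/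
/-!
A discrete valuation is at most `1` on every element having `n`-th roots for arbitrarily large
`n`. By Hensel's lemma each element of `1 + pℤ_[p]` has an `n`-th root for every `n ≡ 1 [MOD p]`,
so any ring homomorphism from `ℤ_[p]` to a discretely valued field maps `pℤ_[p]` into the
valuation ring. If `p` has valuation less than `1`, two such homomorphisms, agreeing on `ℕ`, then
agree modulo every power of `p`, hence everywhere. A finite extension of `ℚ_[p]` carries such a
valuation, given by a prime above `p` of the integral closure of `ℤ_[p]`.
-/

open Filter Polynomial IsDedekindDomain
open scoped WithZero

theorem le_one_of_frequently_exists_pow_eq {a : ℤᵐ⁰} (h : ∃ᶠ n : ℕ in atTop, ∃ b, b ^ n = a) :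
    a ≤ 1 := by
  obtain ⟨n, hn, b, rfl⟩ := frequently_atTop.1 h ((WithZero.log a).natAbs + 1)
  rcases eq_or_ne (b ^ n) 0 with ha | ha
  · exact ha ▸ zero_le_one
  have hdvd : (n : ℤ) ∣ WithZero.log (b ^ n) := by simp [WithZero.log_pow]
  have hlt : |WithZero.log (b ^ n)| < n := by
    rw [Int.abs_eq_natAbs]
    exact_mod_cast hn
  have hlog : WithZero.log (b ^ n) = 0 := Int.eq_zero_of_abs_lt_dvd hdvd hlt
  rw [← WithZero.exp_log ha, hlog, WithZero.exp_zero]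

theorem exists_pow_eq_of_sub_one_mem {R : Type*} [CommRing R] {I : Ideal R} [HenselianRing R I]
    {a : R} (ha : a - 1 ∈ I) {n : ℕ} (hn₀ : n ≠ 0) (hn : IsUnit (n : R ⧸ I)) : ∃ z, z ^ n = a := by
  obtain ⟨z, hz, -⟩ := HenselianRing.is_henselian (I := I) (X ^ n - C a) (monic_X_pow_sub_C a hn₀) 1
    (by simpa using I.neg_mem ha) (by simpa [derivative_X_pow] using hn)
  exact ⟨z, by simpa [sub_eq_zero] using hz⟩

theorem valuation_le_one_of_mem_of_henselianRing {R : Type*} [CommRing R] {I : Ideal R}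
    [HenselianRing R I] {p : ℕ} (hp₀ : p ≠ 0) (hp : (p : R) ∈ I) (v : Valuation R ℤᵐ⁰) {y : R}
    (hy : y ∈ I) : v y ≤ 1 := by
  have hroot (m : ℕ) : ∃ z, z ^ (p * m + 1) = 1 + y := by
    refine exists_pow_eq_of_sub_one_mem (I := I) (by simpa using hy) (Nat.succ_ne_zero _) ?_
    have : (p : R ⧸ I) = 0 := by simpa using Ideal.Quotient.eq_zero_iff_mem.2 hp
    simp [this]
  have hunit : v (1 + y) ≤ 1 := by
    refine le_one_of_frequently_exists_pow_eq (frequently_atTop.2 fun N ↦ ?_)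
    obtain ⟨z, hz⟩ := hroot N
    exact ⟨p * N + 1, by nlinarith [Nat.pos_of_ne_zero hp₀], v z, by rw [← map_pow, hz]⟩
  simpa using v.map_sub_le hunit v.map_one.le

theorem exists_valuation_algebraMap_lt_one {R : Type*} [CommRing R] [IsDedekindDomain R]
    (K : Type*) [Field K] [Algebra R K] [IsFractionRing R K] {x : R} (hx₀ : x ≠ 0)
    (hx : ¬IsUnit x) : ∃ v : Valuation K ℤᵐ⁰, v (algebraMap R K x) < 1 := by
  obtain ⟨P, hP, hxP⟩ := exists_max_ideal_of_mem_nonunits hx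
  have hP₀ : P ≠ ⊥ := by
    rintro rfl
    exact hx₀ hxP
  let w : HeightOneSpectrum R := ⟨P, hP.isPrime, hP₀⟩
  exact ⟨w.valuation K, (w.valuation_lt_one_iff_mem x).2 hxP⟩

theorem exists_valuation_algebraMap_lt_one_of_finiteDimensional {R : Type*} [CommRing R]
    [IsDedekindDomain R] (F L : Type*) [Field F] [Algebra R F] [IsFractionRing R F] [Field L]
    [Algebra F L] [FiniteDimensional F L] [Algebra.IsSeparable F L] [Algebra R L]
    [IsScalarTower R F L] {x : R} (hx₀ : x ≠ 0) (hx : ¬IsUnit x) :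
    ∃ v : Valuation L ℤᵐ⁰, v (algebraMap R L x) < 1 := by
  have : FaithfulSMul R L := .trans R F L
  have : IsDedekindDomain (integralClosure R L) := integralClosure.isDedekindDomain R F L
  have : IsFractionRing (integralClosure R L) L :=
    integralClosure.isFractionRing_of_finite_extension F L
  have hx₀' : algebraMap R (integralClosure R L) x ≠ 0 := by simpa using hx₀
  have hx' : ¬IsUnit (algebraMap R (integralClosure R L) x) := by rwa [isUnit_map_iff]
  exact exists_valuation_algebraMap_lt_one (R := integralClosure R L) L hx₀' hx'

section Padic

variable {p : ℕ} [Fact p.Prime] {S : Type*} [CommRing S]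

theorem valuation_map_natCast_mul_le_one (v : Valuation S ℤᵐ⁰) (f : ℤ_[p] →+* S) (z : ℤ_[p]) :
    v (f (p * z)) ≤ 1 := by
  have hp : (p : ℤ_[p]) ∈ IsLocalRing.maximalIdeal ℤ_[p] := PadicInt.p_nonunit
  exact valuation_le_one_of_mem_of_henselianRing (NeZero.ne p) hp (v.comap f)
    (Ideal.mul_mem_right z _ hp)

theorem valuation_map_sub_map_le_pow (v : Valuation S ℤᵐ⁰) (f g : ℤ_[p] →+* S) (x : ℤ_[p])
    (k : ℕ) : v (f x - g x) ≤ v p ^ k := by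
  obtain ⟨z, hz⟩ := Ideal.mem_span_singleton.1 (PadicInt.appr_spec (k + 1) x)
  have hx : x = x.appr (k + 1) + p ^ k * (p * z) := by linear_combination hz
  have hfg : f x - g x = p ^ k * (f (p * z) - g (p * z)) := by
    rw [hx]
    simp only [map_add, map_mul, map_pow, map_natCast]
    ring
  rw [hfg, map_mul, map_pow]
  exact mul_le_of_le_one_right' <|
    v.map_sub_le (valuation_map_natCast_mul_le_one v f z)
      (valuation_map_natCast_mul_le_one v g z)

end Padic

theorem padicInt_ringHom_eq {p : ℕ} [Fact p.Prime] {K : Type*} [Field K] {v : Valuation K ℤᵐ⁰}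
    (hv : v p < 1) (f g : ℤ_[p] →+* K) : f = g := by
  ext x
  by_contra hne
  have hx : v (f x - g x) ≠ 0 := v.ne_zero_iff.2 (sub_ne_zero.2 hne)
  obtain ⟨k, hk⟩ := exists_pow_lt₀ hv (Units.mk0 _ hx)
  exact (valuation_map_sub_map_le_pow v f g x k).not_gt hk

theorem exists_valuation_natCast_lt_one (p : ℕ) [Fact p.Prime] (K : Type*) [Field K]
    [Algebra ℚ_[p] K] [FiniteDimensional ℚ_[p] K] : ∃ v : Valuation K ℤᵐ⁰, v p < 1 := by
  let : Algebra ℤ_[p] K := ((algebraMap ℚ_[p] K).comp (algebraMap ℤ_[p] ℚ_[p])).toAlgebra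
  have : IsScalarTower ℤ_[p] ℚ_[p] K := .of_algebraMap_eq' rfl
  have hp₀ : (p : ℤ_[p]) ≠ 0 := NeZero.ne _
  simpa using exists_valuation_algebraMap_lt_one_of_finiteDimensional ℚ_[p] K hp₀
    PadicInt.p_nonunit

theorem padic_aut_fixes_Qp_general {p : ℕ} [Fact p.Prime] {K : Type*} [Field K]
    {v : Valuation K ℤᵐ⁰} (hv : v p < 1) (f g : ℚ_[p] →+* K) : f = g :=
  IsFractionRing.ringHom_ext (A := ℤ_[p]) <| RingHom.congr_fun <|
    padicInt_ringHom_eq hv (f.comp (algebraMap ℤ_[p] ℚ_[p])) (g.comp (algebraMap ℤ_[p] ℚ_[p]))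

/-- Let `K` be a finite field extension of `ℚ_p`. Then every ring
automorphism of `K` fixes `ℚ_p` pointwise; in particular every ring automorphism of
`ℚ_p` is the identity. -/
theorem padic_aut_fixes_Qp (p : ℕ) [Fact p.Prime] (K : Type*) [Field K]
    [Algebra ℚ_[p] K] [FiniteDimensional ℚ_[p] K] :
    (∀ φ : K ≃+* K, ∀ x : ℚ_[p], φ (algebraMap ℚ_[p] K x) = algebraMap ℚ_[p] K x) ∧
    ∀ ψ : ℚ_[p] ≃+* ℚ_[p], ψ = RingEquiv.refl ℚ_[p] := by
  obtain ⟨v, hv⟩ := exists_valuation_natCast_lt_one p K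
  obtain ⟨w, hw⟩ := exists_valuation_natCast_lt_one p ℚ_[p]
  exact ⟨fun φ ↦ RingHom.congr_fun <|
      padic_aut_fixes_Qp_general hv ((φ : K →+* K).comp (algebraMap ℚ_[p] K)) (algebraMap ℚ_[p] K),
    fun ψ ↦ RingEquiv.ext <| RingHom.congr_fun <|
      padic_aut_fixes_Qp_general hw (ψ : ℚ_[p] →+* ℚ_[p]) (RingHom.id ℚ_[p])⟩
end
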